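/- arXiv:2605.16709 — 4 statements merged into one kernel-verified Lean document; each statement's English description precedes it below -/
import Mathlib

section
/- Strong soft-covering lemma (doubly-exponential concentration). Let U, X be finite sets, P_U a pmf on U, and W_{X|U} a conditional pmf; let P_X(x) = Σ_u P_U(u) W_{X|U}(x|u) and let I(U;X) be the mutual information under the joint pmf P_U · W_{X|U}. For each n, let C_n = (U^n(1), …, U^n(N_n)) with N_n = ⌈2^{nR}⌉ be a random codebook whose codewords are drawn independently, each from P_U^{⊗n}, and let P̂_{X^n}(x^n) = (1/N_n) Σ_{i=1}^{N_n} ∏_{t=1}^n W_{X|U}(x_t | U_t(i)). If R > I(U;X), then there exist γ₁ > 0 and γ₂ > 0 such that for all sufficiently large n, P( V(P̂_{X^n}, P_X^{⊗n}) > (1/√2) e^{−γ₁ n} ) ≤ e^{−e^{γ₂ n}}. -/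
open Finset Filter Real

noncomputable section

open scoped Classical

/-- Pushforward of a mass function along a map. -/
def pushf {α β : Type*} [Fintype α] (p : α → ℝ) (f : α → β) : β → ℝ :=
  fun b => ∑ a, if f a = b then p a else 0

/-- Shannon entropy (in bits) of a mass function on a finite type,
with the convention `0 * logb 2 0 = 0`. -/
def ent {α : Type*} [Fintype α] (p : α → ℝ) : ℝ := -∑ a, p a * Real.logb 2 (p a)

/-- Shannon entropy (in bits) of a random variable `f` under the mass function `p`. -/
def entRV {α β : Type*} [Fintype α] [Fintype β] (p : α → ℝ) (f : α → β) : ℝ :=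
  ent (pushf p f)

/-- Mutual information `I(f; g)` (in bits) under the mass function `p`. -/
def mi {α β γ : Type*} [Fintype α] [Fintype β] [Fintype γ]
    (p : α → ℝ) (f : α → β) (g : α → γ) : ℝ :=
  entRV p f + entRV p g - entRV p (fun a => (f a, g a))

/-- Conditional mutual information `I(f; g | h)` (in bits) under the mass function `p`. -/
def cmi {α β γ δ : Type*} [Fintype α] [Fintype β] [Fintype γ] [Fintype δ]
    (p : α → ℝ) (f : α → β) (g : α → γ) (h : α → δ) : ℝ :=
  entRV p (fun a => (f a, h a)) + entRV p (fun a => (g a, h a))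
    - entRV p (fun a => (f a, g a, h a)) - entRV p h

/-- Conditional entropy `H(f | g)` (in bits) under the mass function `p`. -/
def condEnt {α β γ : Type*} [Fintype α] [Fintype β] [Fintype γ]
    (p : α → ℝ) (f : α → β) (g : α → γ) : ℝ :=
  entRV p (fun a => (f a, g a)) - entRV p g

/-- Total variation distance between two mass functions on a finite type. -/
def TV {α : Type*} [Fintype α] (p q : α → ℝ) : ℝ := (∑ a, |p a - q a|) / 2

/-- The binary entropy function (in bits), with `h2 0 = h2 1 = 0`. -/
def h2 (t : ℝ) : ℝ := -(t * Real.logb 2 t) - (1 - t) * Real.logb 2 (1 - t)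

lemma ssc_sum_cons {α : Type*} [Fintype α] (N : ℕ) (F : (Fin (N+1) → α) → ℝ) :
    ∑ c, F c = ∑ a, ∑ c : Fin N → α, F (Fin.cons a c) := by
  rw [← Fintype.sum_prod_type' (f := fun a (c : Fin N → α) => F (Fin.cons a c))]
  exact (Fintype.sum_equiv (Fin.consEquiv (fun _ => α)) _ _ (fun x => rfl)).symm

lemma ssc_sum_prod {α : Type*} [Fintype α] (p : α → ℝ) (N : ℕ) :
    ∑ c : Fin N → α, ∏ i, p (c i) = (∑ a, p a) ^ N := by
  have := Finset.prod_univ_sum (fun _ : Fin N => (Finset.univ : Finset α)) (fun _ a => p a)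
  rw [Fintype.piFinset_univ] at this
  rw [← this]; simp

lemma ssc_sum_prod' {α : Type*} [Fintype α] (N : ℕ) (p : Fin N → α → ℝ) :
    ∑ c : Fin N → α, ∏ i, p i (c i) = ∏ i, (∑ a, p i a) := by
  have := Finset.prod_univ_sum (fun _ : Fin N => (Finset.univ : Finset α)) p
  rw [Fintype.piFinset_univ] at this
  rw [← this]

lemma ssc_lin {α : Type*} [Fintype α] (p : α → ℝ) (hp1 : ∑ a, p a = 1) (k : α → ℝ) (N : ℕ) :
    ∑ c : Fin N → α, (∏ i, p (c i)) * ∑ i, k (c i) = N * ∑ a, p a * k a := by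
  induction N with
  | zero => simp
  | succ N ih =>
    rw [ssc_sum_cons]
    simp only [Fin.prod_univ_succ, Fin.sum_univ_succ, Fin.cons_zero, Fin.cons_succ]
    have : ∀ a, ∑ c : Fin N → α, p a * (∏ i, p (c i)) * (k a + ∑ i, k (c i))
        = p a * k a + p a * (N * ∑ a, p a * k a) := by
      intro a
      rw [← ih, Finset.mul_sum]
      have h := ssc_sum_prod p N
      rw [hp1, one_pow] at h
      have : p a * k a = ∑ c : Fin N → α, p a * k a * ∏ i, p (c i) := by
        rw [← Finset.mul_sum, h, mul_one]
      rw [this, ← Finset.sum_add_distrib]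
      exact Finset.sum_congr rfl (fun c _ => by ring)
    simp only [this, Finset.sum_add_distrib, ← Finset.sum_mul, hp1]
    push_cast; ring

lemma ssc_var {α : Type*} [Fintype α] (p : α → ℝ) (hp1 : ∑ a, p a = 1) (g : α → ℝ)
    (hg : ∑ a, p a * g a = 0) (N : ℕ) :
    ∑ c : Fin N → α, (∏ i, p (c i)) * (∑ i, g (c i)) ^ 2 = N * ∑ a, p a * g a ^ 2 := by
  induction N with
  | zero => simp
  | succ N ih =>
    rw [ssc_sum_cons]
    simp only [Fin.prod_univ_succ, Fin.sum_univ_succ, Fin.cons_zero, Fin.cons_succ]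
    have hl := ssc_lin p hp1 g N
    rw [hg, mul_zero] at hl
    have : ∀ a, ∑ c : Fin N → α, p a * (∏ i, p (c i)) * (g a + ∑ i, g (c i)) ^ 2
        = p a * g a ^ 2 + p a * (N * ∑ a, p a * g a ^ 2) := by
      intro a
      have h := ssc_sum_prod p N
      rw [hp1, one_pow] at h
      have : ∑ c : Fin N → α, p a * (∏ i, p (c i)) * (g a + ∑ i, g (c i)) ^ 2
        = p a * g a ^ 2 * (∑ c : Fin N → α, ∏ i, p (c i))
          + 2 * p a * g a * (∑ c : Fin N → α, (∏ i, p (c i)) * ∑ i, g (c i))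
          + p a * (∑ c : Fin N → α, (∏ i, p (c i)) * (∑ i, g (c i)) ^ 2) := by
        rw [Finset.mul_sum, Finset.mul_sum, Finset.mul_sum, ← Finset.sum_add_distrib,
          ← Finset.sum_add_distrib]
        exact Finset.sum_congr rfl (fun c _ => by ring)
      rw [this, h, hl, ih]; ring
    simp only [this, Finset.sum_add_distrib, ← Finset.sum_mul, hp1]
    push_cast; ring

lemma ssc_single {α : Type*} [Fintype α] (p : α → ℝ) (hp0 : ∀ a, 0 ≤ p a) (hp1 : ∑ a, p a = 1)
    (l K : ℝ) (hl : 0 ≤ l) (hlK : l * K ≤ 1) (g : α → ℝ) (hg : ∀ a b, |g a - g b| ≤ K) :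
    ∑ a, p a * Real.exp (l * g a) ≤ Real.exp (l * ∑ a, p a * g a + (l * K) ^ 2) := by
  set m := ∑ a, p a * g a with hm
  have hdev : ∀ a, |g a - m| ≤ K := by
    intro a
    have : g a - m = ∑ b, p b * (g a - g b) := by
      simp only [mul_sub, Finset.sum_sub_distrib, ← Finset.sum_mul, hp1, hm]; ring
    rw [this]
    calc _ ≤ ∑ b, |p b * (g a - g b)| := Finset.abs_sum_le_sum_abs _ _
      _ ≤ ∑ b, p b * K := by
        refine Finset.sum_le_sum (fun b _ => ?_)
        rw [abs_mul, abs_of_nonneg (hp0 b)]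
        exact mul_le_mul_of_nonneg_left (hg a b) (hp0 b)
      _ = K := by rw [← Finset.sum_mul, hp1, one_mul]
  have hpt : ∀ a, Real.exp (l * (g a - m)) ≤ 1 + l * (g a - m) + (l * K) ^ 2 := by
    intro a
    have h1 : |l * (g a - m)| ≤ l * K := by
      rw [abs_mul, abs_of_nonneg hl]; exact mul_le_mul_of_nonneg_left (hdev a) hl
    have h2 := (abs_le.1 (Real.abs_exp_sub_one_sub_id_le (h1.trans hlK))).2
    have h3 : (l * (g a - m)) ^ 2 ≤ (l * K) ^ 2 := by
      rw [← sq_abs (l * (g a - m))]; gcongr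
    linarith
  have e1 : ∀ a, p a * Real.exp (l * g a) = Real.exp (l * m) * (p a * Real.exp (l * (g a - m))) := by
    intro a
    rw [mul_left_comm, ← Real.exp_add]; ring_nf
  simp only [e1, ← Finset.mul_sum]
  rw [Real.exp_add]
  refine mul_le_mul_of_nonneg_left ?_ (Real.exp_nonneg _)
  calc _ ≤ ∑ a, p a * (1 + l * (g a - m) + (l * K) ^ 2) :=
        Finset.sum_le_sum (fun a _ => mul_le_mul_of_nonneg_left (hpt a) (hp0 a))
    _ = (∑ a, p a) * (1 - l * m + (l*K)^2) + l * ∑ a, p a * g a := by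
        clear_value m
        rw [Finset.sum_mul, Finset.mul_sum, ← Finset.sum_add_distrib]
        exact Finset.sum_congr rfl (fun c _ => by ring)
    _ = (l * K) ^ 2 + 1 := by rw [hp1, ← hm]; ring
    _ ≤ _ := Real.add_one_le_exp _

lemma ssc_mcd {α : Type*} [Fintype α] (p : α → ℝ) (hp0 : ∀ a, 0 ≤ p a) (hp1 : ∑ a, p a = 1)
    (l K : ℝ) (hl : 0 ≤ l) (hlK : l * K ≤ 1) (N : ℕ) : ∀ (f : (Fin N → α) → ℝ),
    (∀ c i a, |f (Function.update c i a) - f c| ≤ K) →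
    ∑ c : Fin N → α, (∏ i, p (c i)) * Real.exp (l * f c)
      ≤ Real.exp (l * (∑ c : Fin N → α, (∏ i, p (c i)) * f c) + N * (l * K) ^ 2) := by
  induction N with
  | zero => intro f _; simp
  | succ N ih =>
    intro f hf
    rw [ssc_sum_cons, ssc_sum_cons]
    simp only [Fin.prod_univ_succ, Fin.cons_zero, Fin.cons_succ, mul_assoc, ← Finset.mul_sum]
    set g : α → ℝ := fun a => ∑ c : Fin N → α, (∏ i, p (c i)) * f (Fin.cons a c) with hgdef
    have hP := ssc_sum_prod p N
    rw [hp1, one_pow] at hP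
    have hg : ∀ a b, |g a - g b| ≤ K := by
      intro a b
      simp only [hgdef, ← Finset.sum_sub_distrib, ← mul_sub]
      calc _ ≤ ∑ c : Fin N → α, |(∏ i, p (c i)) * (f (Fin.cons a c) - f (Fin.cons b c))| :=
            Finset.abs_sum_le_sum_abs _ _
        _ ≤ ∑ c : Fin N → α, (∏ i, p (c i)) * K := by
          refine Finset.sum_le_sum (fun c _ => ?_)
          have h0 : 0 ≤ ∏ i, p (c i) := Finset.prod_nonneg (fun i _ => hp0 _)
          rw [abs_mul, abs_of_nonneg h0]
          refine mul_le_mul_of_nonneg_left ?_ h0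
          have := hf (Fin.cons b c) 0 a
          rwa [Fin.update_cons_zero] at this
        _ = K := by rw [← Finset.sum_mul, hP, one_mul]
    calc _ ≤ ∑ a, p a * Real.exp (l * g a + N * (l * K) ^ 2) := by
          refine Finset.sum_le_sum (fun a _ => mul_le_mul_of_nonneg_left ?_ (hp0 a))
          refine ih (fun c => f (Fin.cons a c)) (fun c i b => ?_)
          have := hf (Fin.cons a c) i.succ b
          rwa [← Fin.cons_update] at this
      _ = (∑ a, p a * Real.exp (l * g a)) * Real.exp (N * (l * K) ^ 2) := by
          rw [Finset.sum_mul]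
          exact Finset.sum_congr rfl (fun a _ => by rw [Real.exp_add]; ring)
      _ ≤ Real.exp (l * ∑ a, p a * g a + (l * K) ^ 2) * Real.exp (N * (l * K) ^ 2) :=
          mul_le_mul_of_nonneg_right (ssc_single p hp0 hp1 l K hl hlK g hg) (Real.exp_nonneg _)
      _ = _ := by
          rw [← Real.exp_add]; congr 1; push_cast; ring

lemma ssc_oneb {α : Type*} [Fintype α] (p : α → ℝ) (hp0 : ∀ a, 0 ≤ p a) (hp1 : ∑ a, p a = 1)
    (w : α → ℝ) (hw : ∀ a, 0 ≤ w a) (S : α → Prop) (t q : ℝ) (ht : 0 ≤ t)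
    (hq : q = ∑ a, p a * w a) (hS : ∀ a, S a → p a * w a ^ 2 ≤ t * q * (p a * w a))
    (N : ℕ) (hN : 0 < N) :
    ∑ c : Fin N → α, (∏ i, p (c i)) * |1 / (N:ℝ) * ∑ i, w (c i) - q|
      ≤ q * √(t / N) + 2 * ∑ a, if S a then 0 else p a * w a := by
  have hN' : (0:ℝ) < N := by exact_mod_cast hN
  have hq0 : 0 ≤ q := hq ▸ Finset.sum_nonneg (fun a _ => mul_nonneg (hp0 a) (hw a))
  have hP := ssc_sum_prod p N
  rw [hp1, one_pow] at hP
  set v : α → ℝ := fun a => if S a then w a else 0 with hv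
  set k : α → ℝ := fun a => if S a then 0 else w a with hk
  have hk0 : ∀ a, 0 ≤ k a := by intro a; simp only [hk]; split_ifs <;> simp [hw]
  have hwvk : ∀ a, w a = v a + k a := by intro a; simp only [hv, hk]; split_ifs <;> simp
  set m := ∑ a, p a * v a with hm
  set kk := ∑ a, p a * k a with hkk
  have hkk0 : 0 ≤ kk := Finset.sum_nonneg (fun a _ => mul_nonneg (hp0 a) (hk0 a))
  have hkk' : (∑ a, if S a then 0 else p a * w a) = kk := by
    refine Finset.sum_congr rfl (fun a _ => ?_)
    simp only [hk]; split_ifs <;> simp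
  have hqm : q = m + kk := by
    rw [hq, hm, hkk, ← Finset.sum_add_distrib]
    exact Finset.sum_congr rfl (fun a _ => by rw [hwvk a]; ring)
  have hgm : ∑ a, p a * (v a - m) = 0 := by
    simp only [mul_sub, Finset.sum_sub_distrib, ← Finset.sum_mul, hp1]; rw [← hm]; ring
  have hvar := ssc_var p hp1 (fun a => v a - m) hgm N
  have hlin := ssc_lin p hp1 k N
  have hP0 : ∀ c : Fin N → α, 0 ≤ ∏ i, p (c i) := fun c => Finset.prod_nonneg (fun i _ => hp0 _)
  have hpt : ∀ c : Fin N → α, |1 / (N:ℝ) * ∑ i, w (c i) - q| ≤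
      1 / (N:ℝ) * |∑ i, (v (c i) - m)| + 1 / (N:ℝ) * ∑ i, k (c i) + kk := by
    intro c
    have e : 1 / (N:ℝ) * ∑ i, w (c i) - q =
      1 / (N:ℝ) * (∑ i, (v (c i) - m)) + 1 / (N:ℝ) * ∑ i, k (c i) - kk := by
      simp only [hwvk, Finset.sum_add_distrib, Finset.sum_sub_distrib, hqm]
      simp
      field_simp
      ring
    rw [e]
    have h1 : 0 ≤ 1 / (N:ℝ) * ∑ i, k (c i) :=
      mul_nonneg (by positivity) (Finset.sum_nonneg (fun i _ => hk0 _))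
    have h2 : 1 / (N:ℝ) * |∑ i, (v (c i) - m)| = |1 / (N:ℝ) * ∑ i, (v (c i) - m)| := by
      rw [abs_mul, abs_of_nonneg (by positivity : 0 ≤ 1 / (N:ℝ))]
    rw [h2]
    have h3 := neg_abs_le (1 / (N:ℝ) * ∑ i, (v (c i) - m))
    have h4 := le_abs_self (1 / (N:ℝ) * ∑ i, (v (c i) - m))
    rw [abs_le]; constructor <;> linarith
  have hA : ∑ a, p a * (v a - m) ^ 2 ≤ t * q ^ 2 := by
    have e : ∑ a, p a * (v a - m) ^ 2 = ∑ a, p a * v a ^ 2 - m ^ 2 := by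
      have : ∑ a, p a * (v a - m) ^ 2 = ∑ a, p a * v a ^ 2 - 2 * m * (∑ a, p a * v a)
          + m ^ 2 * ∑ a, p a := by
        clear_value m
        rw [Finset.mul_sum, Finset.mul_sum, ← Finset.sum_sub_distrib, ← Finset.sum_add_distrib]
        exact Finset.sum_congr rfl (fun a _ => by ring)
      rw [this, hp1, ← hm]; ring
    rw [e]
    have : ∑ a, p a * v a ^ 2 ≤ ∑ a, t * q * (p a * w a) := by
      refine Finset.sum_le_sum (fun a _ => ?_)
      by_cases h : S a
      · simpa [hv, h] using hS a h
      · simp only [hv, h, if_false]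
        have := mul_nonneg (mul_nonneg ht hq0) (mul_nonneg (hp0 a) (hw a))
        simpa using this
    rw [← Finset.mul_sum, ← hq] at this
    nlinarith [sq_nonneg m]
  have hB : ∑ c : Fin N → α, (∏ i, p (c i)) * |∑ i, (v (c i) - m)| ≤ √(N * (t * q ^ 2)) := by
    refine Real.le_sqrt_of_sq_le ?_
    have := Finset.sum_sq_le_sum_mul_sum_of_sq_le_mul (Finset.univ : Finset (Fin N → α))
      (r := fun c => (∏ i, p (c i)) * |∑ i, (v (c i) - m)|)
      (f := fun c => ∏ i, p (c i)) (g := fun c => (∏ i, p (c i)) * (∑ i, (v (c i) - m)) ^ 2)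
      (fun c _ => hP0 c) (fun c _ => mul_nonneg (hP0 c) (sq_nonneg _))
      (fun c _ => le_of_eq (by rw [mul_pow, sq_abs]; ring))
    rw [hP, one_mul, hvar] at this
    exact this.trans (mul_le_mul_of_nonneg_left hA hN'.le)
  have hC : 1 / (N:ℝ) * √(N * (t * q ^ 2)) = q * √(t / N) := by
    have : (N:ℝ) * (t * q ^ 2) = (N * q) ^ 2 * (t / N) := by field_simp
    rw [this, Real.sqrt_mul (sq_nonneg _), Real.sqrt_sq (by positivity)]
    field_simp
  calc _ ≤ ∑ c : Fin N → α, (∏ i, p (c i)) * (1 / (N:ℝ) * |∑ i, (v (c i) - m)|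
            + 1 / (N:ℝ) * ∑ i, k (c i) + kk) :=
        Finset.sum_le_sum (fun c _ => mul_le_mul_of_nonneg_left (hpt c) (hP0 c))
    _ = 1 / (N:ℝ) * (∑ c : Fin N → α, (∏ i, p (c i)) * |∑ i, (v (c i) - m)|)
        + 1 / (N:ℝ) * (∑ c : Fin N → α, (∏ i, p (c i)) * ∑ i, k (c i))
        + kk * ∑ c : Fin N → α, (∏ i, p (c i)) := by
        rw [Finset.mul_sum, Finset.mul_sum, Finset.mul_sum, ← Finset.sum_add_distrib,
          ← Finset.sum_add_distrib]
        exact Finset.sum_congr rfl (fun c _ => by ring)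
    _ ≤ 1 / (N:ℝ) * √(N * (t * q ^ 2)) + 1 / (N:ℝ) * (N * kk) + kk := by
        rw [hP, hlin, mul_one]; gcongr
    _ = _ := by
        rw [hC, hkk']; field_simp; ring

lemma ssc_phi {ι : Type*} [Fintype ι] (Q D : ι → ℝ) (hQ1 : ∑ z, Q z = 1)
    (hD : ∑ z, Q z * D z < 0) : ∃ s > (0:ℝ), ∑ z, Q z * Real.exp (s * D z) < 1 := by
  have hd : HasDerivAt (fun s : ℝ => ∑ z, Q z * Real.exp (s * D z)) (∑ z, Q z * D z) 0 := by
    refine HasDerivAt.fun_sum (fun z _ => ?_)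
    have h1 : HasDerivAt (fun s : ℝ => s * D z) (D z) 0 := by
      simpa using (hasDerivAt_id (0:ℝ)).mul_const (D z)
    have := (h1.exp).const_mul (Q z)
    simpa using this
  have h2 := hd.tendsto_slope_zero_right
  have h3 := (h2.eventually (gt_mem_nhds hD)).and self_mem_nhdsWithin
  obtain ⟨s, hs1, hs2⟩ := h3.exists
  refine ⟨s, hs2, ?_⟩
  have hs2 : 0 < s := hs2
  simp only [zero_add, zero_mul, Real.exp_zero, mul_one, hQ1, smul_eq_mul] at hs1
  by_contra hcon
  push Not at hcon
  have : 0 ≤ s⁻¹ * (∑ z, Q z * Real.exp (s * D z) - 1) :=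
    mul_nonneg (by positivity) (by linarith)
  linarith

lemma ssc_mi {U X : Type*} [Fintype U] [Fintype X] (PU : U → ℝ) (W : U → X → ℝ)
    (hW1 : ∀ u, ∑ x, W u x = 1) :
    mi (fun z : U × X => PU z.1 * W z.1 z.2) Prod.fst Prod.snd * Real.log 2 =
      ∑ z : U × X, PU z.1 * W z.1 z.2 *
        (Real.log (W z.1 z.2) - Real.log (∑ u, PU u * W u z.2)) := by
  have h2 : Real.log 2 ≠ 0 := (Real.log_pos (by norm_num)).ne'
  have e1 : pushf (fun z : U × X => PU z.1 * W z.1 z.2) Prod.fst = PU := by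
    funext u
    simp only [pushf, Fintype.sum_prod_type]
    rw [Finset.sum_eq_single u]
    · simp [← Finset.mul_sum, hW1]
    · intro b _ hb; simp [hb]
    · simp
  have e2 : pushf (fun z : U × X => PU z.1 * W z.1 z.2) Prod.snd
      = fun x => ∑ u, PU u * W u x := by
    funext x
    simp [pushf, Fintype.sum_prod_type]
  have e3 : pushf (fun z : U × X => PU z.1 * W z.1 z.2) (fun a => (a.1, a.2))
      = fun z : U × X => PU z.1 * W z.1 z.2 := by
    funext z
    simp [pushf]
  simp only [mi, entRV, e1, e2, e3, ent]
  have f1 : (∑ u, PU u * Real.logb 2 (PU u))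
      = ∑ z : U × X, PU z.1 * W z.1 z.2 * Real.logb 2 (PU z.1) := by
    rw [Fintype.sum_prod_type]
    refine Finset.sum_congr rfl (fun u _ => ?_)
    simp only [← Finset.sum_mul, ← Finset.mul_sum, hW1, mul_one]
  have f2 : (∑ x, (∑ u, PU u * W u x) * Real.logb 2 (∑ u, PU u * W u x))
      = ∑ z : U × X, PU z.1 * W z.1 z.2 * Real.logb 2 (∑ u, PU u * W u z.2) := by
    rw [Fintype.sum_prod_type_right]
    refine Finset.sum_congr rfl (fun u _ => ?_)
    simp only [← Finset.sum_mul]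
  rw [f1, f2]
  rw [← Finset.sum_neg_distrib, ← Finset.sum_neg_distrib, ← Finset.sum_neg_distrib,
    ← Finset.sum_add_distrib, ← Finset.sum_sub_distrib, Finset.sum_mul]
  refine Finset.sum_congr rfl (fun z _ => ?_)
  by_cases hz : PU z.1 * W z.1 z.2 = 0
  · simp [hz]
  · have ha := left_ne_zero_of_mul hz
    have hb := right_ne_zero_of_mul hz
    simp only [Real.logb, Real.log_mul ha hb]
    field_simp
    ring

lemma ssc_nonneg {U X : Type*} [Fintype U] [Fintype X] (PU : U → ℝ) (W : U → X → ℝ)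
    (hPU0 : ∀ u, 0 ≤ PU u) (hPU1 : ∑ u, PU u = 1)
    (hW0 : ∀ u x, 0 ≤ W u x) (hW1 : ∀ u, ∑ x, W u x = 1) :
    0 ≤ ∑ z : U × X, PU z.1 * W z.1 z.2 *
        (Real.log (W z.1 z.2) - Real.log (∑ u, PU u * W u z.2)) := by
  have h : ∀ z : U × X, PU z.1 * W z.1 z.2 - PU z.1 * (∑ u, PU u * W u z.2) ≤
      PU z.1 * W z.1 z.2 * (Real.log (W z.1 z.2) - Real.log (∑ u, PU u * W u z.2)) := by
    intro z
    set q := ∑ u, PU u * W u z.2 with hq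
    have hq0 : 0 ≤ q := Finset.sum_nonneg (fun u _ => mul_nonneg (hPU0 u) (hW0 u _))
    by_cases hz : PU z.1 * W z.1 z.2 = 0
    · rw [hz]; have := mul_nonneg (hPU0 z.1) hq0; linarith
    · have hz' : 0 < PU z.1 * W z.1 z.2 :=
        lt_of_le_of_ne (mul_nonneg (hPU0 _) (hW0 _ _)) (Ne.symm hz)
      have hw : 0 < W z.1 z.2 := lt_of_le_of_ne (hW0 _ _) (Ne.symm (right_ne_zero_of_mul hz))
      have hqp : 0 < q := lt_of_lt_of_le hz'
        (Finset.single_le_sum (f := fun u => PU u * W u z.2)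
          (fun u _ => mul_nonneg (hPU0 u) (hW0 u _)) (Finset.mem_univ z.1))
      have h1 := Real.log_le_sub_one_of_pos (div_pos hqp hw)
      rw [Real.log_div hqp.ne' hw.ne'] at h1
      calc _ = PU z.1 * W z.1 z.2 * (1 - q / W z.1 z.2) := by field_simp
        _ ≤ _ := mul_le_mul_of_nonneg_left (by linarith) hz'.le
  refine le_trans ?_ (Finset.sum_le_sum (fun z _ => h z))
  rw [Finset.sum_sub_distrib, Fintype.sum_prod_type, Fintype.sum_prod_type]
  simp only [← Finset.mul_sum, hW1, mul_one]
  rw [Finset.sum_comm]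
  simp only [← Finset.mul_sum, hW1, mul_one, hPU1]
  simp [hPU1]

lemma ssc_expect {U X : Type*} [Fintype U] [Fintype X]
    (PU : U → ℝ) (W : U → X → ℝ)
    (hPU0 : ∀ u, 0 ≤ PU u) (hPU1 : ∑ u, PU u = 1)
    (hW0 : ∀ u x, 0 ≤ W u x) (hW1 : ∀ u, ∑ x, W u x = 1) (r s : ℝ) (hs : 0 ≤ s)
    (n N : ℕ) (hN : 0 < N) :
    ∑ c : Fin N → Fin n → U, (∏ i, ∏ t, PU (c i t)) *
      TV (fun xn : Fin n → X => (1 / (N : ℝ)) * ∑ i, ∏ t, W (c i t) (xn t))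
              (fun xn : Fin n → X => ∏ t, ∑ u, PU u * W u (xn t))
      ≤ √(Real.exp (n * r) / N) / 2 + (∑ z : U × X, PU z.1 * W z.1 z.2 * Real.exp (s *
        (Real.log (W z.1 z.2) - Real.log (∑ u, PU u * W u z.2) - r))) ^ n := by
  set q : X → ℝ := fun x => ∑ u, PU u * W u x with hq
  set D : U → X → ℝ := fun u x => Real.log (W u x) - Real.log (q x) - r with hD
  have hq1 : ∑ x, q x = 1 := by
    simp only [hq]
    rw [Finset.sum_comm]
    simp only [← Finset.mul_sum, hW1, mul_one, hPU1]
  have hqn : ∀ xn : Fin n → X, ∏ t, q (xn t)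
      = ∑ u : Fin n → U, (∏ t, PU (u t)) * ∏ t, W (u t) (xn t) := by
    intro xn
    simp only [hq, ← Finset.prod_mul_distrib]
    exact (ssc_sum_prod' n (fun t u => PU u * W u (xn t))).symm
  have key : ∀ xn : Fin n → X, _ := fun xn =>
    ssc_oneb (fun u : Fin n → U => ∏ t, PU (u t)) (fun u => Finset.prod_nonneg (fun t _ => hPU0 _))
      (by rw [ssc_sum_prod, hPU1, one_pow]) (fun u => ∏ t, W (u t) (xn t))
      (fun u => Finset.prod_nonneg (fun t _ => hW0 _ _)) (fun u => ∑ t, D (u t) (xn t) ≤ 0)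
      (Real.exp (n * r)) (∏ t, q (xn t)) (Real.exp_nonneg _) (hqn xn) (by
        intro u hu
        have hA : 0 ≤ ∏ t, PU (u t) := Finset.prod_nonneg (fun t _ => hPU0 _)
        have hB : 0 ≤ ∏ t, W (u t) (xn t) := Finset.prod_nonneg (fun t _ => hW0 _ _)
        by_cases hz : (∏ t, PU (u t)) * ∏ t, W (u t) (xn t) = 0
        · rw [sq, ← mul_assoc, hz]; simp
        · have hz1 := Finset.prod_ne_zero_iff.1 (left_ne_zero_of_mul hz)
          have hz2 := Finset.prod_ne_zero_iff.1 (right_ne_zero_of_mul hz)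
          have hpt : ∀ t, W (u t) (xn t) = Real.exp (D (u t) (xn t)) * (Real.exp r * q (xn t)) := by
            intro t
            have hw : 0 < W (u t) (xn t) :=
              lt_of_le_of_ne (hW0 _ _) (Ne.symm (hz2 t (Finset.mem_univ t)))
            have hp : 0 < PU (u t) :=
              lt_of_le_of_ne (hPU0 _) (Ne.symm (hz1 t (Finset.mem_univ t)))
            have hqp : 0 < q (xn t) := lt_of_lt_of_le (mul_pos hp hw)
              (Finset.single_le_sum (f := fun u => PU u * W u (xn t))
              (fun u _ => mul_nonneg (hPU0 u) (hW0 u _)) (Finset.mem_univ (u t)))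
            simp only [hD]
            rw [Real.exp_sub, Real.exp_sub, Real.exp_log hw, Real.exp_log hqp]
            field_simp
          have hle : ∏ t, W (u t) (xn t) ≤ Real.exp (n * r) * ∏ t, q (xn t) := by
            have hq0 : 0 ≤ ∏ t, q (xn t) := Finset.prod_nonneg (fun t _ =>
              Finset.sum_nonneg (fun u _ => mul_nonneg (hPU0 u) (hW0 u _)))
            have e : ∏ t, W (u t) (xn t) = Real.exp (∑ t, D (u t) (xn t)) *
                (Real.exp (n * r) * ∏ t, q (xn t)) := by
              rw [Finset.prod_congr rfl (fun t _ => hpt t), Finset.prod_mul_distrib,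
                Finset.prod_mul_distrib, Real.exp_sum, Finset.prod_const, Real.exp_nat_mul]
              simp
            rw [e]
            refine mul_le_of_le_one_left (mul_nonneg (Real.exp_nonneg _) hq0) ?_
            exact Real.exp_le_one_iff.2 hu
          calc _ = (∏ t, W (u t) (xn t)) * ((∏ t, PU (u t)) * ∏ t, W (u t) (xn t)) := by ring
            _ ≤ _ := mul_le_mul_of_nonneg_right hle (mul_nonneg hA hB)) N hN
  have hsum := Finset.sum_le_sum (fun xn (_ : xn ∈ (Finset.univ : Finset (Fin n → X))) => key xn)
  rw [Finset.sum_comm, Finset.sum_add_distrib, ← Finset.sum_mul, ← Finset.mul_sum,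
    ssc_sum_prod q n, hq1, one_pow, one_mul] at hsum
  have hat : ∑ xn : Fin n → X, ∑ u : Fin n → U, (if ∑ t, D (u t) (xn t) ≤ 0 then 0 else
      (∏ t, PU (u t)) * ∏ t, W (u t) (xn t)) ≤
      (∑ z : U × X, PU z.1 * W z.1 z.2 * Real.exp (s * D z.1 z.2)) ^ n := by
    calc _ ≤ ∑ xn : Fin n → X, ∑ u : Fin n → U,
          ∏ t, (PU (u t) * W (u t) (xn t) * Real.exp (s * D (u t) (xn t))) := by
          refine Finset.sum_le_sum (fun xn _ => Finset.sum_le_sum (fun u _ => ?_))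
          have hA : 0 ≤ ∏ t, PU (u t) := Finset.prod_nonneg (fun t _ => hPU0 _)
          have hB : 0 ≤ ∏ t, W (u t) (xn t) := Finset.prod_nonneg (fun t _ => hW0 _ _)
          rw [Finset.prod_mul_distrib, Finset.prod_mul_distrib, ← Real.exp_sum, ← Finset.mul_sum]
          split_ifs with h
          · positivity
          · push Not at h
            exact le_mul_of_one_le_right (mul_nonneg hA hB)
              (Real.one_le_exp (mul_nonneg hs h.le))
      _ = _ := by
          rw [Fintype.sum_prod_type_right, ← ssc_sum_prod
            (fun x => ∑ u, PU u * W u x * Real.exp (s * D u x)) n]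
          refine Finset.sum_congr rfl (fun xn _ => ?_)
          exact ssc_sum_prod' n (fun t u => PU u * W u (xn t) * Real.exp (s * D u (xn t)))
  have e : ∑ c : Fin N → Fin n → U, (∏ i, ∏ t, PU (c i t)) *
      TV (fun xn : Fin n → X => (1 / (N : ℝ)) * ∑ i, ∏ t, W (c i t) (xn t))
              (fun xn : Fin n → X => ∏ t, q (xn t)) =
      (∑ c : Fin N → Fin n → U, ∑ xn : Fin n → X, (∏ i, ∏ t, PU (c i t)) *
        |1 / (N:ℝ) * ∑ i, ∏ t, W (c i t) (xn t) - ∏ t, q (xn t)|) / 2 := by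
    simp only [TV]
    rw [Finset.sum_div]
    refine Finset.sum_congr rfl (fun c _ => ?_)
    rw [← Finset.mul_sum, mul_div_assoc]
  rw [e]
  linarith

lemma ssc_bdd {α β : Type*} [Fintype α] [Fintype β] (w : α → β → ℝ) (q : β → ℝ)
    (hw0 : ∀ a b, 0 ≤ w a b) (hw1 : ∀ a, ∑ b, w a b = 1) (N : ℕ)
    (c : Fin N → α) (j : Fin N) (a : α) :
    |TV (fun b => 1 / (N:ℝ) * ∑ i, w (Function.update c j a i) b) q
      - TV (fun b => 1 / (N:ℝ) * ∑ i, w (c i) b) q| ≤ 1 / N := by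
  have hN0 : (0:ℝ) ≤ 1 / N := by positivity
  simp only [TV]
  rw [← sub_div, ← Finset.sum_sub_distrib, abs_div, abs_of_pos (by norm_num : (0:ℝ) < 2),
    div_le_iff₀ (by norm_num)]
  calc _ ≤ ∑ b, 1 / (N:ℝ) * (w a b + w (c j) b) := by
        refine (Finset.abs_sum_le_sum_abs _ _).trans (Finset.sum_le_sum (fun b _ => ?_))
        refine (abs_abs_sub_abs_le_abs_sub _ _).trans ?_
        have : ∑ i, w (Function.update c j a i) b - ∑ i, w (c i) b = w a b - w (c j) b := by
          rw [← Finset.sum_sub_distrib, Finset.sum_eq_single j]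
          · simp
          · intro i _ hi; simp [Function.update_of_ne hi]
          · simp
        have e : 1 / (N:ℝ) * ∑ i, w (Function.update c j a i) b - q b
            - (1 / (N:ℝ) * ∑ i, w (c i) b - q b) = 1 / (N:ℝ) * (w a b - w (c j) b) := by
          rw [← this]; ring
        rw [e, abs_mul, abs_of_nonneg hN0]
        refine mul_le_mul_of_nonneg_left ?_ hN0
        rw [abs_le]; constructor <;> linarith [hw0 a b, hw0 (c j) b]
    _ = _ := by
        rw [← Finset.mul_sum, Finset.sum_add_distrib, hw1, hw1]; ring

lemma ssc_tail {α : Type*} [Fintype α] (p : α → ℝ) (hp0 : ∀ a, 0 ≤ p a) (hp1 : ∑ a, p a = 1)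
    (N : ℕ) (hN : 0 < N) (f : (Fin N → α) → ℝ)
    (hf : ∀ c i a, |f (Function.update c i a) - f c| ≤ 1 / N) (θ t : ℝ) (ht : 0 ≤ t) (ht1 : t ≤ 1)
    (hE : ∑ c : Fin N → α, (∏ i, p (c i)) * f c + t ≤ θ) :
    (∑ c : Fin N → α, if f c > θ then ∏ i, p (c i) else 0) ≤ Real.exp (-(N * t ^ 2 / 4)) := by
  have hN' : (0:ℝ) < N := by exact_mod_cast hN
  have hm := ssc_mcd p hp0 hp1 (N * t / 2) (1 / N) (by positivity)
    (by field_simp; linarith) N f hf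
  set E := ∑ c : Fin N → α, (∏ i, p (c i)) * f c
  calc _ ≤ ∑ c : Fin N → α, Real.exp (-(N * t / 2 * θ)) *
        ((∏ i, p (c i)) * Real.exp (N * t / 2 * f c)) := by
        refine Finset.sum_le_sum (fun c _ => ?_)
        have hP0 : 0 ≤ ∏ i, p (c i) := Finset.prod_nonneg (fun i _ => hp0 _)
        split_ifs with h
        · rw [mul_left_comm, ← Real.exp_add]
          refine le_mul_of_one_le_right hP0 (Real.one_le_exp ?_)
          have : N * t / 2 * θ ≤ N * t / 2 * f c := mul_le_mul_of_nonneg_left h.le (by positivity)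
          linarith
        · positivity
    _ ≤ Real.exp (-(N * t / 2 * θ)) * Real.exp (N * t / 2 * E + N * (N * t / 2 * (1 / N)) ^ 2) := by
        rw [← Finset.mul_sum]
        exact mul_le_mul_of_nonneg_left hm (Real.exp_nonneg _)
    _ ≤ _ := by
        rw [← Real.exp_add]
        refine Real.exp_le_exp.2 ?_
        have h1 : N * t / 2 * (E + t) ≤ N * t / 2 * θ := mul_le_mul_of_nonneg_left hE (by positivity)
        have h2 : (N:ℝ) * (N * t / 2 * (1 / N)) ^ 2 = N * t ^ 2 / 4 := by field_simp; ring
        rw [h2]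
        nlinarith

/-- **Strong soft-covering lemma (doubly-exponential concentration).**  Let `P_U` be a
pmf on a finite set `U` and `W = W_{X|U}` a conditional pmf with output marginal `P_X`.
For each `n`, draw a random codebook of `N_n = ⌈2^{nR}⌉` codewords i.i.d. from
`P_U^{⊗n}` and let `P̂_{Xⁿ}` be the induced output pmf.  If `R > I(U;X)`, then there
exist `γ₁, γ₂ > 0` such that for all sufficiently large `n`,
`P(V(P̂_{Xⁿ}, P_X^{⊗n}) > (1/√2) e^{−γ₁ n}) ≤ e^{−e^{γ₂ n}}`. -/
theorem strong_soft_covering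
    {U X : Type*} [Fintype U] [Fintype X]
    (PU : U → ℝ) (W : U → X → ℝ)
    (hPU0 : ∀ u, 0 ≤ PU u) (hPU1 : ∑ u, PU u = 1)
    (hW0 : ∀ u x, 0 ≤ W u x) (hW1 : ∀ u, ∑ x, W u x = 1)
    (R : ℝ)
    (hR : R > mi (fun z : U × X => PU z.1 * W z.1 z.2) Prod.fst Prod.snd) :
    ∃ γ₁ > (0 : ℝ), ∃ γ₂ > (0 : ℝ), ∀ᶠ n : ℕ in atTop,
      (∑ c : Fin (⌈(2 : ℝ) ^ ((n : ℝ) * R)⌉₊) → Fin n → U,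
        if TV (fun xn : Fin n → X =>
                (1 / ((⌈(2 : ℝ) ^ ((n : ℝ) * R)⌉₊ : ℕ) : ℝ)) *
                  ∑ i, ∏ t, W (c i t) (xn t))
              (fun xn : Fin n → X => ∏ t, ∑ u, PU u * W u (xn t))
            > (1 / Real.sqrt 2) * Real.exp (-γ₁ * (n : ℝ))
        then ∏ i, ∏ t, PU (c i t) else 0)
        ≤ Real.exp (-Real.exp (γ₂ * (n : ℝ))) := by
  set J := ∑ z : U × X, PU z.1 * W z.1 z.2 *
        (Real.log (W z.1 z.2) - Real.log (∑ u, PU u * W u z.2)) with hJ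
  have hJ0 : 0 ≤ J := ssc_nonneg PU W hPU0 hPU1 hW0 hW1
  have hl2 : 0 < Real.log 2 := Real.log_pos (by norm_num)
  have hJR : J < R * Real.log 2 := by
    rw [hJ, ← ssc_mi PU W hW1]
    exact mul_lt_mul_of_pos_right hR hl2
  set r := (J + R * Real.log 2) / 2 with hr
  have hQ1 : ∑ z : U × X, PU z.1 * W z.1 z.2 = 1 := by
    rw [Fintype.sum_prod_type]
    simp only [← Finset.mul_sum, hW1, mul_one, hPU1]
  obtain ⟨s, hs, hphi⟩ := ssc_phi (fun z : U × X => PU z.1 * W z.1 z.2)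
    (fun z => Real.log (W z.1 z.2) - Real.log (∑ u, PU u * W u z.2) - r) hQ1 (by
      have : ∀ z : U × X, PU z.1 * W z.1 z.2 *
          (Real.log (W z.1 z.2) - Real.log (∑ u, PU u * W u z.2) - r) = PU z.1 * W z.1 z.2 *
          (Real.log (W z.1 z.2) - Real.log (∑ u, PU u * W u z.2)) - PU z.1 * W z.1 z.2 * r := by
        intro z; ring
      simp only [this, Finset.sum_sub_distrib, ← Finset.sum_mul, hQ1]
      rw [← hJ]; linarith)
  have hexp := fun n N hN => ssc_expect PU W hPU0 hPU1 hW0 hW1 r s hs.le n N hN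
  set φ := ∑ z : U × X, PU z.1 * W z.1 z.2 * Real.exp (s *
        (Real.log (W z.1 z.2) - Real.log (∑ u, PU u * W u z.2) - r)) with hφ
  have hφ0 : 0 ≤ φ := Finset.sum_nonneg (fun z _ =>
    mul_nonneg (mul_nonneg (hPU0 _) (hW0 _ _)) (Real.exp_nonneg _))
  clear_value φ r J
  obtain ⟨d, hd, hd1, hd2, hd3⟩ : ∃ d > (0:ℝ), 2 * d ≤ R * Real.log 2 - r ∧
      2 * d ≤ R * Real.log 2 ∧ φ ≤ Real.exp (-d) := by
    have hm0 : 0 < max φ (1/2) := lt_max_of_lt_right (by norm_num)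
    have hm1 : max φ (1/2) < 1 := max_lt hphi (by norm_num)
    have hlog := Real.log_neg hm0 hm1
    refine ⟨min ((R * Real.log 2 - r) / 2) (-Real.log (max φ (1/2))), lt_min ?_ ?_, ?_, ?_, ?_⟩
    · linarith
    · linarith
    · have := min_le_left ((R * Real.log 2 - r) / 2) (-Real.log (max φ (1/2))); linarith
    · have := min_le_left ((R * Real.log 2 - r) / 2) (-Real.log (max φ (1/2))); linarith
    · have := min_le_right ((R * Real.log 2 - r) / 2) (-Real.log (max φ (1/2)))
      calc φ ≤ max φ (1/2) := le_max_left _ _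
        _ = Real.exp (Real.log (max φ (1/2))) := (Real.exp_log hm0).symm
        _ ≤ _ := Real.exp_le_exp.2 (by linarith)
  refine ⟨d / 2, by positivity, d / 2, by positivity, ?_⟩
  have htend : Tendsto (fun n : ℕ => Real.exp (d / 2 * (n:ℝ))) atTop atTop :=
    Real.tendsto_exp_atTop.comp
      (tendsto_natCast_atTop_atTop.const_mul_atTop (by positivity))
  filter_upwards [htend.eventually_ge_atTop 32] with n hn
  set N := ⌈(2 : ℝ) ^ ((n : ℝ) * R)⌉₊ with hNdef
  set y := Real.exp (d / 2 * (n:ℝ)) with hy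
  have hy0 : 0 < y := Real.exp_pos _
  have hNR : Real.exp (n * (R * Real.log 2)) ≤ N := by
    have : Real.exp (n * (R * Real.log 2)) = (2:ℝ) ^ ((n:ℝ) * R) := by
      rw [Real.rpow_def_of_pos (by norm_num)]; congr 1; ring
    rw [this]; exact Nat.le_ceil _
  have hN0 : 0 < N := by
    have : (0:ℝ) < N := lt_of_lt_of_le (Real.exp_pos _) hNR
    exact_mod_cast this
  have hN0' : (0:ℝ) < N := by exact_mod_cast hN0
  have hyN : y ^ 4 ≤ N := by
    refine le_trans ?_ hNR
    rw [hy, ← Real.exp_nat_mul]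
    refine Real.exp_le_exp.2 ?_
    have := mul_le_mul_of_nonneg_left hd2 (Nat.cast_nonneg (α := ℝ) n)
    push_cast; linarith
  have hyinv : Real.exp (-(d / 2) * (n:ℝ)) = y⁻¹ := by
    rw [hy, ← Real.exp_neg]; congr 1; ring
  have hyinv2 : Real.exp (-d * n) = y⁻¹ ^ 2 := by
    rw [← hyinv, ← Real.exp_nat_mul]; congr 1; push_cast; ring
  have hE := hexp n N hN0
  have hE1 : √(Real.exp (n * r) / N) ≤ y⁻¹ ^ 2 := by
    refine Real.sqrt_le_iff.2 ⟨by positivity, ?_⟩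
    rw [div_le_iff₀ hN0', ← hyinv2, ← Real.exp_nat_mul]
    calc Real.exp (n * r) ≤ Real.exp (((2:ℕ):ℝ) * (-d * n)) * Real.exp (n * (R * Real.log 2)) := by
          rw [← Real.exp_add]
          refine Real.exp_le_exp.2 ?_
          have := mul_le_mul_of_nonneg_left hd1 (Nat.cast_nonneg (α := ℝ) n)
          push_cast; linarith
      _ ≤ _ := mul_le_mul_of_nonneg_left hNR (Real.exp_nonneg _)
  have hE2 : φ ^ n ≤ y⁻¹ ^ 2 := by
    rw [← hyinv2]
    calc φ ^ n ≤ Real.exp (-d) ^ n := pow_le_pow_left₀ hφ0 hd3 n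
      _ = _ := by rw [← Real.exp_nat_mul]; congr 1; ring
  have hy1 : y⁻¹ ≤ 1 / 32 := by
    rw [one_div]; exact inv_anti₀ (by norm_num) hn
  have hyi0 : 0 < y⁻¹ := inv_pos.2 hy0
  have hs2 : (1:ℝ) / 2 ≤ 1 / √2 := by
    refine one_div_le_one_div_of_le (by positivity) ?_
    exact Real.sqrt_le_iff.2 ⟨by norm_num, by norm_num⟩
  have hs1 : (1:ℝ) / √2 ≤ 1 := by
    rw [div_le_one (by positivity)]
    exact Real.one_le_sqrt.2 (by norm_num)
  have hss : (1 / √2) ^ 2 = (1:ℝ) / 2 := by rw [div_pow, Real.sq_sqrt (by norm_num)]; norm_num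
  rw [hyinv]
  have hfin := ssc_tail (fun u : Fin n → U => ∏ t, PU (u t))
    (fun u => Finset.prod_nonneg (fun t _ => hPU0 _))
    (by rw [ssc_sum_prod, hPU1, one_pow]) N hN0
    (fun c => TV (fun xn : Fin n → X => (1 / (N : ℝ)) * ∑ i, ∏ t, W (c i t) (xn t))
              (fun xn : Fin n → X => ∏ t, ∑ u, PU u * W u (xn t)))
    (fun c j a => ssc_bdd (fun (u : Fin n → U) (xn : Fin n → X) => ∏ t, W (u t) (xn t)) _
      (fun u xn => Finset.prod_nonneg (fun t _ => hW0 _ _))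
      (fun u => by rw [ssc_sum_prod' n (fun t x => W (u t) x)]; simp [hW1]) N c j a)
    (1 / √2 * y⁻¹) (1 / √2 * y⁻¹ / 2) (by positivity) (by nlinarith) (by
      have h1 : y⁻¹ ^ 2 ≤ 1 / 32 * y⁻¹ := by
        rw [sq]; exact mul_le_mul_of_nonneg_right hy1 hyi0.le
      have h2 : 1 / 2 * y⁻¹ ≤ 1 / √2 * y⁻¹ := mul_le_mul_of_nonneg_right hs2 hyi0.le
      linarith)
  refine hfin.trans (Real.exp_le_exp.2 (neg_le_neg ?_))
  have e : (N:ℝ) * (1 / √2 * y⁻¹ / 2) ^ 2 / 4 = N * y⁻¹ ^ 2 / 32 := by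
    rw [div_pow, mul_pow, hss]; ring
  rw [e]
  calc y ≤ y ^ 4 * y⁻¹ ^ 2 / 32 := by
        have : y ^ 4 * y⁻¹ ^ 2 = y * y := by field_simp
        rw [this]; nlinarith
    _ ≤ _ := by gcongr
end
end

section
/- Uniform-over-messages soft covering via union bound (semantic secrecy step of the achievability proof). Let U, Y be finite sets, P_U a pmf on U, W_{Y|U} a conditional pmf, P_Y the induced output marginal, and I(U;Y) the mutual information under P_U · W_{Y|U}. For each n, let {U^n(m, ℓ) : m ∈ [1 : ⌈2^{nR}⌉], ℓ ∈ [1 : ⌈2^{nR'}⌉]} be a codebook of codewords drawn independently, each from P_U^{⊗n}, and for each m let Q̂^m_{Y^n}(y^n) = (1/⌈2^{nR'}⌉) Σ_ℓ ∏_{t=1}^n W_{Y|U}(y_t | U_t(m, ℓ)). If R' > I(U;Y), then there exist γ₁ > 0 and γ₂ > 0 such that for all sufficiently large n, P( max_m V(Q̂^m_{Y^n}, P_Y^{⊗n}) > (1/√2) e^{−γ₁ n} ) ≤ ⌈2^{nR}⌉ · e^{−e^{γ₂ n}}; in particular this probability tends to 0 as n → ∞. -/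
open Finset Filter Real

noncomputable section

open scoped Classical

namespace SoftCov

lemma sum_cons {A : Type*} [Fintype A] {M : ℕ} (F : (Fin (M+1) → A) → ℝ) :
    ∑ d, F d = ∑ a, ∑ d : Fin M → A, F (Fin.cons a d) := by
  rw [← (Fin.consEquiv (fun _ : Fin (M+1) => A)).sum_comp, Fintype.sum_prod_type]
  rfl

lemma sum_pi {A : Type*} [Fintype A] {K : Type*} [Fintype K] [DecidableEq K] (g : K → A → ℝ) :
    ∑ d : K → A, ∏ k, g k (d k) = ∏ k, ∑ a, g k a := by
  have := Finset.prod_univ_sum (fun _ : K => (Finset.univ : Finset A)) g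
  rw [this, Fintype.piFinset_univ]

lemma sum_prod_one {A : Type*} [Fintype A] {K : Type*} [Fintype K] [DecidableEq K] (p : A → ℝ)
    (h1 : ∑ a, p a = 1) : ∑ d : K → A, ∏ k, p (d k) = 1 := by
  rw [sum_pi (fun _ => p)]; simp [h1]

lemma marginal {A : Type*} [Fintype A] {K : Type*} [Fintype K] [DecidableEq K] (p : A → ℝ)
    (h1 : ∑ a, p a = 1) (m : K) (G : A → ℝ) :
    ∑ d : K → A, (∏ k, p (d k)) * G (d m) = ∑ a, p a * G a := by
  have h := sum_pi (fun (k : K) a => p a * (if k = m then G a else 1))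
  have h2 : ∀ d : K → A, ∏ k, (p (d k) * (if k = m then G (d k) else 1))
      = (∏ k, p (d k)) * G (d m) := by
    intro d
    rw [Finset.prod_mul_distrib, Finset.prod_ite_eq' ]
    simp
  simp only [h2] at h
  rw [h, ← Finset.mul_prod_erase _ _ (Finset.mem_univ m)]
  rw [Finset.prod_eq_one]
  · simp
  · intro k hk
    have : k ≠ m := Finset.ne_of_mem_erase hk
    simp [this, h1]

lemma mgf_bound {A : Type*} [Fintype A] (p : A → ℝ) (h0 : ∀ a, 0 ≤ p a) (h1 : ∑ a, p a = 1)
    (c lam : ℝ) (hlam : 0 ≤ lam) (hlc : lam * c ≤ 1) :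
    ∀ (M : ℕ) (f : (Fin M → A) → ℝ),
      (∀ d i a, |f (Function.update d i a) - f d| ≤ c) →
      ∑ d, (∏ i, p (d i)) * Real.exp (lam * f d)
        ≤ Real.exp (lam * (∑ d, (∏ i, p (d i)) * f d) + M * (lam * c) ^ 2) := by
  intro M
  induction M with
  | zero => intro f _; simp
  | succ M ih =>
    intro f hf
    rw [sum_cons, sum_cons]
    simp only [Fin.prod_univ_succ, Fin.cons_zero, Fin.cons_succ]
    set g : A → ℝ := fun a => ∑ d : Fin M → A, (∏ i, p (d i)) * f (Fin.cons a d) with hg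
    set μ : ℝ := ∑ a, p a * g a with hμ
    have e1 : ∑ a, ∑ d : Fin M → A, p a * (∏ i, p (d i)) * f (Fin.cons a d) = μ := by
      simp only [hμ, hg, Finset.mul_sum, mul_assoc]
    rw [e1]
    have hpd : ∀ d : Fin M → A, 0 ≤ ∏ i, p (d i) := fun d => Finset.prod_nonneg fun i _ => h0 _
    have hgd : ∀ a b, |g a - g b| ≤ c := by
      intro a b
      simp only [hg, ← Finset.sum_sub_distrib, ← mul_sub]
      calc _ ≤ ∑ d : Fin M → A, |(∏ i, p (d i)) * (f (Fin.cons a d) - f (Fin.cons b d))| :=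
            Finset.abs_sum_le_sum_abs _ _
        _ ≤ ∑ d : Fin M → A, (∏ i, p (d i)) * c := by
            refine Finset.sum_le_sum fun d _ => ?_
            rw [abs_mul, abs_of_nonneg (hpd d)]
            refine mul_le_mul_of_nonneg_left ?_ (hpd d)
            have := hf (Fin.cons b d) 0 a
            rwa [Fin.update_cons_zero] at this
        _ = c := by rw [← Finset.sum_mul, sum_prod_one p h1, one_mul]
    have hgm : ∀ a, |g a - μ| ≤ c := by
      intro a
      have : g a - μ = ∑ b, p b * (g a - g b) := by
        simp only [mul_sub, Finset.sum_sub_distrib, ← Finset.sum_mul, h1, one_mul, hμ]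
      rw [this]
      calc _ ≤ ∑ b, |p b * (g a - g b)| := Finset.abs_sum_le_sum_abs _ _
        _ ≤ ∑ b, p b * c := by
            refine Finset.sum_le_sum fun b _ => ?_
            rw [abs_mul, abs_of_nonneg (h0 b)]
            exact mul_le_mul_of_nonneg_left (hgd a b) (h0 b)
        _ = c := by rw [← Finset.sum_mul, h1, one_mul]
    have hstep : ∀ a, ∑ d : Fin M → A, p a * (∏ i, p (d i)) * Real.exp (lam * f (Fin.cons a d))
        ≤ p a * Real.exp (lam * g a + M * (lam * c) ^ 2) := by
      intro a
      simp only [mul_assoc, ← Finset.mul_sum]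
      refine mul_le_mul_of_nonneg_left ?_ (h0 a)
      refine ih (fun d => f (Fin.cons a d)) ?_
      intro d i b
      have := hf (Fin.cons a d) i.succ b
      rwa [← Fin.cons_update] at this
    have hexp : ∀ a, Real.exp (lam * (g a - μ)) ≤ 1 + lam * (g a - μ) + (lam * c) ^ 2 := by
      intro a
      have hb : |lam * (g a - μ)| ≤ lam * c := by
        rw [abs_mul, abs_of_nonneg hlam]
        exact mul_le_mul_of_nonneg_left (hgm a) hlam
      have h2 := (abs_le.1 (Real.abs_exp_sub_one_sub_id_le (hb.trans hlc))).2
      have h3 : (lam * (g a - μ)) ^ 2 ≤ (lam * c) ^ 2 := by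
        rw [← sq_abs]; exact pow_le_pow_left₀ (abs_nonneg _) hb 2
      linarith
    calc _ ≤ ∑ a, p a * Real.exp (lam * g a + M * (lam * c) ^ 2) :=
          Finset.sum_le_sum fun a _ => hstep a
      _ = Real.exp (lam * μ + M * (lam * c) ^ 2) * ∑ a, p a * Real.exp (lam * (g a - μ)) := by
          rw [Finset.mul_sum]
          refine Finset.sum_congr rfl fun a _ => ?_
          rw [mul_left_comm, ← Real.exp_add]
          congr 2; ring
      _ ≤ Real.exp (lam * μ + M * (lam * c) ^ 2) *
            ∑ a, p a * (1 + lam * (g a - μ) + (lam * c) ^ 2) := by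
          refine mul_le_mul_of_nonneg_left ?_ (Real.exp_nonneg _)
          exact Finset.sum_le_sum fun a _ => mul_le_mul_of_nonneg_left (hexp a) (h0 a)
      _ = Real.exp (lam * μ + M * (lam * c) ^ 2) * (1 + (lam * c) ^ 2) := by
          congr 1
          have : ∀ a, p a * (1 + lam * (g a - μ) + (lam * c) ^ 2)
            = p a * (1 - lam * μ + (lam * c) ^ 2) + lam * (p a * g a) := fun a => by ring
          simp only [this, Finset.sum_add_distrib, ← Finset.sum_mul, ← Finset.mul_sum, h1]
          rw [← hμ]; ring
      _ ≤ Real.exp (lam * μ + M * (lam * c) ^ 2) * Real.exp ((lam * c) ^ 2) := by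
          refine mul_le_mul_of_nonneg_left ?_ (Real.exp_nonneg _)
          have := Real.add_one_le_exp ((lam * c) ^ 2); linarith
      _ = _ := by
          rw [← Real.exp_add]; congr 1; push_cast; ring

lemma tail_bound {A : Type*} [Fintype A] (p : A → ℝ) (h0 : ∀ a, 0 ≤ p a) (h1 : ∑ a, p a = 1)
    (M : ℕ) (hM : 0 < M) (f : (Fin M → A) → ℝ)
    (hf : ∀ d i a, |f (Function.update d i a) - f d| ≤ 1 / M)
    (t x : ℝ) (ht0 : 0 ≤ t) (ht1 : t ≤ 1)
    (hx : (∑ d, (∏ i, p (d i)) * f d) + t ≤ x) :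
    ∑ d, (if f d > x then ∏ i, p (d i) else 0) ≤ Real.exp (-(M * t ^ 2 / 4)) := by
  have hM' : (0:ℝ) < M := by exact_mod_cast hM
  set lam : ℝ := t * M / 2 with hl
  have hlam : 0 ≤ lam := by positivity
  have hlc : lam * (1 / M) = t / 2 := by rw [hl]; field_simp
  have h := mgf_bound p h0 h1 (1 / M) lam hlam (by rw [hlc]; linarith) M f hf
  rw [hlc] at h
  have hpd : ∀ d : Fin M → A, 0 ≤ ∏ i, p (d i) := fun d => Finset.prod_nonneg fun i _ => h0 _
  calc _ ≤ ∑ d, Real.exp (-(lam * x)) * ((∏ i, p (d i)) * Real.exp (lam * f d)) := by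
        refine Finset.sum_le_sum fun d _ => ?_
        rw [mul_left_comm, ← Real.exp_add]
        split_ifs with hd
        · refine le_mul_of_one_le_right (hpd d) (Real.one_le_exp ?_)
          nlinarith
        · exact mul_nonneg (hpd d) (Real.exp_nonneg _)
    _ = Real.exp (-(lam * x)) * ∑ d, ((∏ i, p (d i)) * Real.exp (lam * f d)) := by
        rw [Finset.mul_sum]
    _ ≤ _ := by
        refine (mul_le_mul_of_nonneg_left h (Real.exp_nonneg _)).trans ?_
        rw [← Real.exp_add]
        refine Real.exp_le_exp.2 ?_
        have := mul_le_mul_of_nonneg_left hx hlam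
        have h3 : lam * t = M * t ^ 2 / 2 := by rw [hl]; ring
        nlinarith

lemma second_moment {A : Type*} [Fintype A] (p : A → ℝ) (h1 : ∑ a, p a = 1)
    (h : A → ℝ) (hh : ∑ a, p a * h a = 0) :
    ∀ M : ℕ, ∑ d : Fin M → A, (∏ i, p (d i)) * (∑ i, h (d i)) ^ 2
      = M * ∑ a, p a * h a ^ 2 := by
  intro M
  induction M with
  | zero => simp
  | succ M ih =>
    rw [sum_cons]
    simp only [Fin.prod_univ_succ, Fin.sum_univ_succ, Fin.cons_zero, Fin.cons_succ]
    have : ∀ a, ∑ d : Fin M → A, p a * (∏ i, p (d i)) * (h a + ∑ i, h (d i)) ^ 2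
        = p a * h a ^ 2 + 2 * (p a * h a) * (∑ d : Fin M → A, (∏ i, p (d i)) * ∑ i, h (d i))
          + p a * (M * ∑ a, p a * h a ^ 2) := by
      intro a
      rw [← ih]
      have e : p a * h a ^ 2 = p a * h a ^ 2 * ∑ d : Fin M → A, ∏ i, p (d i) := by
        rw [sum_prod_one p h1, mul_one]
      rw [e, Finset.mul_sum, Finset.mul_sum, Finset.mul_sum, ← Finset.sum_add_distrib,
        ← Finset.sum_add_distrib]
      exact Finset.sum_congr rfl fun d _ => by ring
    simp only [this, Finset.sum_add_distrib, ← Finset.sum_mul, ← Finset.mul_sum, hh, h1]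
    push_cast; ring

/-- one-shot soft covering in mean -/
lemma mean_bound {A B : Type*} [Fintype A] [Fintype B] (p : A → ℝ) (h0 : ∀ a, 0 ≤ p a)
    (h1 : ∑ a, p a = 1) (V : A → B → ℝ) (hV0 : ∀ a b, 0 ≤ V a b) (hV1 : ∀ a, ∑ b, V a b = 1)
    (M : ℕ) (hM : 0 < M) (T : ℝ) (hT : 0 ≤ T) :
    ∑ d : Fin M → A, (∏ i, p (d i)) *
      TV (fun b => (1 / (M : ℝ)) * ∑ l, V (d l) b) (fun b => ∑ a, p a * V a b)
    ≤ Real.sqrt (T / M) +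
      ∑ b, ∑ a, p a * (if V a b > T * ∑ a', p a' * V a' b then V a b else 0) := by
  have hM' : (0:ℝ) < M := by exact_mod_cast hM
  have hpd : ∀ d : Fin M → A, 0 ≤ ∏ i, p (d i) := fun d => Finset.prod_nonneg fun i _ => h0 _
  set P : B → ℝ := fun b => ∑ a, p a * V a b with hP
  have hP0 : ∀ b, 0 ≤ P b := fun b => Finset.sum_nonneg fun a _ => mul_nonneg (h0 a) (hV0 a b)
  have hP1 : ∑ b, P b = 1 := by
    simp only [hP]; rw [Finset.sum_comm]; simp only [← Finset.mul_sum, hV1, mul_one, h1]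
  set X2 : A → B → ℝ := fun a b => if V a b > T * P b then V a b else 0 with hX2
  have hX20 : ∀ a b, 0 ≤ X2 a b := by
    intro a b; simp only [hX2]; split_ifs; exacts [hV0 a b, le_rfl]
  set X1 : A → B → ℝ := fun a b => V a b - X2 a b with hX1
  have hX1b : ∀ a b, 0 ≤ X1 a b ∧ X1 a b ^ 2 ≤ T * P b * V a b := by
    intro a b; simp only [hX1, hX2]
    have := hV0 a b
    have := hP0 b
    split_ifs with hc
    · simp; positivity
    · refine ⟨by simpa using hV0 a b, ?_⟩
      push Not at hc
      rw [sub_zero, sq]; exact mul_le_mul_of_nonneg_right hc (hV0 a b)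
  have key : ∀ b, ∑ d : Fin M → A, (∏ i, p (d i)) * |(1 / (M : ℝ)) * ∑ l, V (d l) b - P b|
      ≤ Real.sqrt (T / M) * P b + 2 * ∑ a, p a * X2 a b := by
    intro b
    set μ1 := ∑ a, p a * X1 a b with hμ1
    set μ2 := ∑ a, p a * X2 a b with hμ2
    have hμ : P b = μ1 + μ2 := by
      simp only [hP, hμ1, hμ2, hX1, mul_sub, Finset.sum_sub_distrib]; ring
    have hμ20 : 0 ≤ μ2 := Finset.sum_nonneg fun a _ => mul_nonneg (h0 a) (hX20 a b)
    set h : A → ℝ := fun a => X1 a b - μ1 with hh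
    have hh0 : ∑ a, p a * h a = 0 := by
      simp only [hh, mul_sub, Finset.sum_sub_distrib, ← Finset.sum_mul, h1]; simp [hμ1]
    have hvar : ∑ a, p a * h a ^ 2 ≤ T * P b ^ 2 := by
      have : ∑ a, p a * h a ^ 2 = ∑ a, p a * X1 a b ^ 2 - μ1 ^ 2 := by
        have e : ∀ a, p a * h a ^ 2 = p a * X1 a b ^ 2 - 2 * μ1 * (p a * X1 a b) + p a * μ1 ^ 2 :=
          fun a => by simp only [hh]; ring
        simp only [e, Finset.sum_add_distrib, Finset.sum_sub_distrib, ← Finset.sum_mul,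
          ← Finset.mul_sum, h1]
        rw [← hμ1]; ring
      have h3 : ∑ a, p a * X1 a b ^ 2 ≤ ∑ a, p a * (T * P b * V a b) :=
        Finset.sum_le_sum fun a _ => mul_le_mul_of_nonneg_left (hX1b a b).2 (h0 a)
      have h4 : ∑ a, p a * (T * P b * V a b) = T * P b ^ 2 := by
        have e : ∀ a, p a * (T * P b * V a b) = T * P b * (p a * V a b) := fun a => by ring
        simp only [e, ← Finset.mul_sum]
        rw [show ∑ a, p a * V a b = P b from rfl]; ring
      nlinarith [sq_nonneg μ1]
    set S : (Fin M → A) → ℝ := fun d => ∑ i, h (d i) with hS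
    have hsm : ∑ d : Fin M → A, (∏ i, p (d i)) * S d ^ 2 ≤ M * (T * P b ^ 2) := by
      rw [hS, second_moment p h1 h hh0]
      exact mul_le_mul_of_nonneg_left hvar hM'.le
    have hcs : (∑ d : Fin M → A, (∏ i, p (d i)) * |S d|) ^ 2
        ≤ ∑ d : Fin M → A, (∏ i, p (d i)) * S d ^ 2 := by
      have hx := Finset.sum_mul_sq_le_sq_mul_sq Finset.univ
        (fun d : Fin M → A => Real.sqrt (∏ i, p (d i)))
        (fun d : Fin M → A => Real.sqrt (∏ i, p (d i)) * |S d|)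
      simp only [← mul_assoc, Real.mul_self_sqrt (hpd _), Real.sq_sqrt (hpd _), mul_pow,
        sum_prod_one p h1, one_mul, sq_abs] at hx
      exact hx
    have hSabs : ∑ d : Fin M → A, (∏ i, p (d i)) * |S d| ≤ M * (Real.sqrt (T / M) * P b) := by
      have hr : 0 ≤ M * (Real.sqrt (T / M) * P b) :=
        mul_nonneg hM'.le (mul_nonneg (Real.sqrt_nonneg _) (hP0 b))
      refine abs_le_of_sq_le_sq' ?_ hr |>.2
      refine (hcs.trans hsm).trans (le_of_eq ?_)
      rw [mul_pow, mul_pow, Real.sq_sqrt (by positivity)]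
      field_simp
    have hpt : ∀ d : Fin M → A, |(1 / (M : ℝ)) * ∑ l, V (d l) b - P b|
        ≤ (1 / (M:ℝ)) * |S d| + ((1 / (M:ℝ)) * ∑ l, X2 (d l) b + μ2) := by
      intro d
      have e : (1 / (M : ℝ)) * ∑ l, V (d l) b - P b
          = (1 / (M:ℝ)) * S d + ((1 / (M:ℝ)) * ∑ l, X2 (d l) b - μ2) := by
        simp only [hS, hh, hX1, Finset.sum_sub_distrib, Finset.sum_const, Finset.card_univ,
          Fintype.card_fin, nsmul_eq_mul]
        rw [hμ]
        field_simp
        ring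
      rw [e]
      have hq : 0 ≤ (1 / (M:ℝ)) * ∑ l, X2 (d l) b :=
        mul_nonneg (by positivity) (Finset.sum_nonneg fun l _ => hX20 _ _)
      refine (abs_add_le _ _).trans (add_le_add ?_ ?_)
      · rw [abs_mul, abs_of_nonneg (by positivity)]
      · rw [abs_le]; constructor <;> linarith
    have hm2 : ∑ d : Fin M → A, (∏ i, p (d i)) * ((1 / (M:ℝ)) * ∑ l, X2 (d l) b) = μ2 := by
      have e : ∀ d : Fin M → A, (∏ i, p (d i)) * ((1 / (M:ℝ)) * ∑ l, X2 (d l) b)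
          = (1 / (M:ℝ)) * ∑ l, (∏ i, p (d i)) * X2 (d l) b := by
        intro d; rw [← Finset.mul_sum]; ring
      simp only [e]
      rw [← Finset.mul_sum, Finset.sum_comm]
      have e2 : ∀ l : Fin M, ∑ d : Fin M → A, (∏ i, p (d i)) * X2 (d l) b = μ2 :=
        fun l => marginal p h1 l (fun a => X2 a b)
      simp only [e2, Finset.sum_const, Finset.card_univ, Fintype.card_fin, nsmul_eq_mul]
      field_simp
    calc _ ≤ ∑ d : Fin M → A, (∏ i, p (d i)) *
          ((1 / (M:ℝ)) * |S d| + ((1 / (M:ℝ)) * ∑ l, X2 (d l) b + μ2)) :=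
          Finset.sum_le_sum fun d _ => mul_le_mul_of_nonneg_left (hpt d) (hpd d)
      _ = (1 / (M:ℝ)) * (∑ d : Fin M → A, (∏ i, p (d i)) * |S d|) + (μ2 + μ2) := by
          simp only [mul_add, Finset.sum_add_distrib]
          rw [hm2, ← Finset.sum_mul, sum_prod_one p h1, one_mul, Finset.mul_sum]
          congr 1
          exact Finset.sum_congr rfl fun d _ => by ring
      _ ≤ (1 / (M:ℝ)) * (M * (Real.sqrt (T / M) * P b)) + (μ2 + μ2) := by
          gcongr
      _ = _ := by field_simp; ring
  have hfin : ∑ d : Fin M → A, (∏ i, p (d i)) *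
      TV (fun b => (1 / (M : ℝ)) * ∑ l, V (d l) b) P
      = (∑ b, ∑ d : Fin M → A, (∏ i, p (d i)) * |(1 / (M : ℝ)) * ∑ l, V (d l) b - P b|) / 2 := by
    rw [Finset.sum_comm, Finset.sum_div]
    refine Finset.sum_congr rfl fun d _ => ?_
    rw [TV, ← Finset.mul_sum]; ring
  rw [hfin]
  have h5 := Finset.sum_le_sum fun b (_ : b ∈ Finset.univ) => key b
  rw [Finset.sum_add_distrib, ← Finset.mul_sum, ← Finset.mul_sum, hP1] at h5
  have := Real.sqrt_nonneg (T / M)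
  linarith

lemma tv_diff {A B : Type*} [Fintype A] [Fintype B] (V : A → B → ℝ) (hV0 : ∀ a b, 0 ≤ V a b)
    (hV1 : ∀ a, ∑ b, V a b = 1) (P : B → ℝ) (M : ℕ) (d : Fin M → A) (i : Fin M) (a : A) :
    |TV (fun b => (1 / (M : ℝ)) * ∑ l, V (Function.update d i a l) b) P
      - TV (fun b => (1 / (M : ℝ)) * ∑ l, V (d l) b) P| ≤ 1 / M := by
  unfold TV
  rw [← sub_div, ← Finset.sum_sub_distrib, abs_div, abs_of_pos (show (0:ℝ) < 2 by norm_num)]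
  have hb : ∀ b, |(|(1 / (M : ℝ)) * ∑ l, V (Function.update d i a l) b - P b|
      - |(1 / (M : ℝ)) * ∑ l, V (d l) b - P b|)| ≤ (1 / (M:ℝ)) * (V a b + V (d i) b) := by
    intro b
    refine (abs_abs_sub_abs_le _ _).trans ?_
    have e : ∑ l, V (Function.update d i a l) b - ∑ l, V (d l) b = V a b - V (d i) b := by
      rw [← Finset.sum_sub_distrib, Finset.sum_eq_single i]
      · simp
      · intro l _ hl; simp [Function.update_of_ne hl]
      · simp
    have e2 : (1 / (M : ℝ)) * ∑ l, V (Function.update d i a l) b - P b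
      - ((1 / (M : ℝ)) * ∑ l, V (d l) b - P b) = (1 / (M:ℝ)) * (V a b - V (d i) b) := by
      rw [← e]; ring
    rw [e2, abs_mul, abs_of_nonneg (show (0:ℝ) ≤ 1 / M by positivity)]
    refine mul_le_mul_of_nonneg_left ?_ (by positivity)
    rw [abs_le]; constructor <;> linarith [hV0 a b, hV0 (d i) b]
  have h2 := (Finset.abs_sum_le_sum_abs _ _).trans
    (Finset.sum_le_sum fun b (_ : b ∈ Finset.univ) => hb b)
  rw [← Finset.mul_sum, Finset.sum_add_distrib, hV1, hV1] at h2
  rw [div_le_iff₀ (by norm_num)]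
  refine h2.trans (le_of_eq (by ring))

lemma union_bound {A : Type*} [Fintype A] (p : A → ℝ) (h0 : ∀ a, 0 ≤ p a) (h1 : ∑ a, p a = 1)
    (K M : ℕ) (E : (Fin M → A) → Prop) (β : ℝ)
    (hE : ∑ d, (if E d then ∏ i, p (d i) else 0) ≤ β) :
    ∑ c : Fin K × Fin M → A, (if ∃ m, E (fun l => c (m, l)) then ∏ ml, p (c ml) else 0)
      ≤ K * β := by
  have hp : ∀ c : Fin K × Fin M → A, 0 ≤ ∏ ml, p (c ml) :=
    fun c => Finset.prod_nonneg fun i _ => h0 _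
  set q : (Fin M → A) → ℝ := fun d => ∏ i, p (d i) with hq
  have hq1 : ∑ d, q d = 1 := sum_prod_one p h1
  calc _ ≤ ∑ c : Fin K × Fin M → A, ∑ m,
        (if E (fun l => c (m, l)) then ∏ ml, p (c ml) else 0) := by
        refine Finset.sum_le_sum fun c _ => ?_
        have hnn : ∀ m ∈ (Finset.univ : Finset (Fin K)),
            0 ≤ (if E (fun l => c (m, l)) then ∏ ml, p (c ml) else 0) := by
          intro m _; split_ifs; exacts [hp c, le_rfl]
        split_ifs with h
        · obtain ⟨m, hm⟩ := h
          have := Finset.single_le_sum hnn (Finset.mem_univ m)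
          rwa [if_pos hm] at this
        · exact Finset.sum_nonneg hnn
    _ = ∑ m : Fin K, ∑ c : Fin K × Fin M → A,
        (if E (fun l => c (m, l)) then ∏ ml, p (c ml) else 0) := Finset.sum_comm
    _ = ∑ m : Fin K, ∑ d, (if E d then q d else 0) := by
        refine Finset.sum_congr rfl fun m _ => ?_
        rw [← (Equiv.curry (Fin K) (Fin M) A).symm.sum_comp]
        have := marginal q hq1 m (fun d => if E d then 1 else 0)
        simp only [mul_ite, mul_one, mul_zero] at this
        rw [← this]
        refine Finset.sum_congr rfl fun c _ => ?_
        simp only [Fintype.prod_prod_type, hq]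
        rfl
    _ ≤ ∑ m : Fin K, β := Finset.sum_le_sum fun m _ => hE
    _ = K * β := by simp


section Info

variable {U Y : Type*} [Fintype U] [Fintype Y] (PU : U → ℝ) (W : U → Y → ℝ)

/-- information density in nats -/
def dens (u : U) (y : Y) : ℝ := Real.log (W u y / ∑ u', PU u' * W u' y)

/-- mutual information in nats -/
def inat : ℝ := ∑ u, ∑ y, PU u * W u y * dens PU W u y

variable {PU W}

lemma PY_pos (hPU0 : ∀ u, 0 ≤ PU u) (hW0 : ∀ u y, 0 ≤ W u y) {u : U} {y : Y}
    (h : 0 < PU u * W u y) : 0 < ∑ u', PU u' * W u' y :=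
  h.trans_le (Finset.single_le_sum (f := fun u' => PU u' * W u' y)
    (fun u' _ => mul_nonneg (hPU0 u') (hW0 u' y)) (Finset.mem_univ u))

lemma pos_of_prod (hPU0 : ∀ u, 0 ≤ PU u) (hW0 : ∀ u y, 0 ≤ W u y) {u : U} {y : Y}
    (h : PU u * W u y ≠ 0) : 0 < PU u ∧ 0 < W u y := by
  obtain ⟨h1, h2⟩ := mul_ne_zero_iff.1 h
  exact ⟨lt_of_le_of_ne (hPU0 u) h1.symm, lt_of_le_of_ne (hW0 u y) h2.symm⟩

lemma mi_eq (hPU0 : ∀ u, 0 ≤ PU u) (hW0 : ∀ u y, 0 ≤ W u y) (hW1 : ∀ u, ∑ y, W u y = 1) :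
    mi (fun z : U × Y => PU z.1 * W z.1 z.2) Prod.fst Prod.snd = inat PU W / Real.log 2 := by
  have e1 : pushf (fun z : U × Y => PU z.1 * W z.1 z.2) Prod.fst = PU := by
    funext u
    simp only [pushf, Fintype.sum_prod_type]
    rw [Finset.sum_eq_single u]
    · simp [← Finset.mul_sum, hW1]
    · intro b _ hb; simp [hb]
    · simp
  have e2 : pushf (fun z : U × Y => PU z.1 * W z.1 z.2) Prod.snd
      = fun y => ∑ u, PU u * W u y := by
    funext y
    simp only [pushf, Fintype.sum_prod_type]
    refine Finset.sum_congr rfl fun u _ => ?_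
    simp
  have e3 : pushf (fun z : U × Y => PU z.1 * W z.1 z.2) (fun a => (a.1, a.2))
      = fun z : U × Y => PU z.1 * W z.1 z.2 := by
    funext z
    simp [pushf]
  simp only [mi, entRV, e1, e2, e3, ent]
  have f1 : ∑ u, PU u * Real.logb 2 (PU u) = ∑ u, ∑ y, PU u * W u y * Real.logb 2 (PU u) := by
    refine Finset.sum_congr rfl fun u _ => ?_
    rw [← Finset.sum_mul, ← Finset.mul_sum, hW1, mul_one]
  have f2 : ∑ y, (∑ u, PU u * W u y) * Real.logb 2 (∑ u, PU u * W u y)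
      = ∑ u, ∑ y, PU u * W u y * Real.logb 2 (∑ u, PU u * W u y) := by
    rw [Finset.sum_comm]
    exact Finset.sum_congr rfl fun y _ => by rw [Finset.sum_mul]
  rw [f1, f2, Fintype.sum_prod_type, inat, Finset.sum_div]
  have f3 : ∀ a b c : ℝ, -a + -b - -c = c - a - b := fun a b c => by ring
  rw [f3, ← Finset.sum_sub_distrib, ← Finset.sum_sub_distrib]
  refine Finset.sum_congr rfl fun u _ => ?_
  rw [Finset.sum_div, ← Finset.sum_sub_distrib, ← Finset.sum_sub_distrib]
  refine Finset.sum_congr rfl fun y _ => ?_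
  by_cases h : PU u * W u y = 0
  · simp [h]
  · obtain ⟨ha, hb⟩ := pos_of_prod hPU0 hW0 h
    have hc := PY_pos hPU0 hW0 (mul_pos ha hb)
    simp only [Real.logb, dens]
    rw [Real.log_mul ha.ne' hb.ne', Real.log_div hb.ne' hc.ne']
    ring

lemma inat_nonneg (hPU0 : ∀ u, 0 ≤ PU u) (hPU1 : ∑ u, PU u = 1)
    (hW0 : ∀ u y, 0 ≤ W u y) (hW1 : ∀ u, ∑ y, W u y = 1) : 0 ≤ inat PU W := by
  have h : ∀ u y, PU u * W u y - PU u * (∑ u', PU u' * W u' y)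
      ≤ PU u * W u y * dens PU W u y := by
    intro u y
    by_cases h : PU u * W u y = 0
    · have : 0 ≤ PU u * (∑ u', PU u' * W u' y) :=
        mul_nonneg (hPU0 u) (Finset.sum_nonneg fun u' _ => mul_nonneg (hPU0 u') (hW0 u' y))
      rw [h]; linarith
    · obtain ⟨ha, hb⟩ := pos_of_prod hPU0 hW0 h
      have hc := PY_pos hPU0 hW0 (mul_pos ha hb)
      have := Real.one_sub_inv_le_log_of_pos (div_pos hb hc)
      refine le_trans (le_of_eq ?_) (mul_le_mul_of_nonneg_left this (mul_pos ha hb).le)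
      field_simp
  have h2 : ∑ u, ∑ y, (PU u * W u y - PU u * (∑ u', PU u' * W u' y)) = 0 := by
    have h3 : ∑ y, ∑ u', PU u' * W u' y = 1 := by
      rw [Finset.sum_comm]; simp only [← Finset.mul_sum, hW1, mul_one, hPU1]
    simp only [Finset.sum_sub_distrib, ← Finset.mul_sum, hW1, h3]; simp
  rw [← h2]
  exact Finset.sum_le_sum fun u _ => Finset.sum_le_sum fun y _ => h u y

lemma chern (hPU0 : ∀ u, 0 ≤ PU u) (hPU1 : ∑ u, PU u = 1)
    (hW0 : ∀ u y, 0 ≤ W u y) (hW1 : ∀ u, ∑ y, W u y = 1) (δ : ℝ) (hδ : 0 < δ) :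
    ∃ β > (0:ℝ), ∀ n : ℕ,
      ∑ yn : Fin n → Y, ∑ un : Fin n → U, (∏ t, PU (un t)) *
        (if ∏ t, W (un t) (yn t) >
            Real.exp (n * (inat PU W + δ)) * ∏ t, ∑ u, PU u * W u (yn t)
          then ∏ t, W (un t) (yn t) else 0) ≤ Real.exp (-β * n) := by
  set L := dens PU W with hL
  set I := inat PU W with hI
  set B : ℝ := 1 + ∑ u, ∑ y, |L u y| with hB
  have hLB : ∀ u y, |L u y| ≤ B := by
    intro u y
    have h1 := Finset.single_le_sum (f := fun y => |L u y|) (fun y _ => abs_nonneg _)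
      (Finset.mem_univ y)
    have h2 := Finset.single_le_sum (f := fun u => ∑ y, |L u y|)
      (fun u _ => Finset.sum_nonneg fun y _ => abs_nonneg _) (Finset.mem_univ u)
    linarith
  have hB0 : 0 < B := by
    have : 0 ≤ ∑ u, ∑ y, |L u y| :=
      Finset.sum_nonneg fun u _ => Finset.sum_nonneg fun y _ => abs_nonneg _
    linarith
  set C : ℝ := ∑ u, ∑ y, PU u * W u y * L u y ^ 2 with hC
  have hJ : ∀ u y, 0 ≤ PU u * W u y := fun u y => mul_nonneg (hPU0 u) (hW0 u y)
  have hC0 : 0 ≤ C :=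
    Finset.sum_nonneg fun u _ => Finset.sum_nonneg fun y _ => mul_nonneg (hJ u y) (sq_nonneg _)
  set s : ℝ := min (1 / B) (δ / (2 * (C + 1))) with hs
  have hs0 : 0 < s := lt_min (by positivity) (by positivity)
  have hsB : s * B ≤ 1 := by
    have := min_le_left (1 / B) (δ / (2 * (C + 1)))
    rw [← hs, le_div_iff₀ hB0] at this; exact this
  have hsC : s * C ≤ δ / 2 := by
    have := min_le_right (1 / B) (δ / (2 * (C + 1)))
    rw [← hs, le_div_iff₀ (by positivity)] at this
    nlinarith
  have hΦ : ∑ y, ∑ u, PU u * W u y * Real.exp (s * L u y) ≤ Real.exp (s * I + s ^ 2 * C) := by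
    rw [Finset.sum_comm]
    have hpt : ∀ u y, PU u * W u y * Real.exp (s * L u y)
        ≤ PU u * W u y + s * (PU u * W u y * L u y) + s ^ 2 * (PU u * W u y * L u y ^ 2) := by
      intro u y
      have h1 : |s * L u y| ≤ 1 := by
        rw [abs_mul, abs_of_pos hs0]
        exact (mul_le_mul_of_nonneg_left (hLB u y) hs0.le).trans hsB
      have h2 := (abs_le.1 (Real.abs_exp_sub_one_sub_id_le h1)).2
      have h3 : Real.exp (s * L u y) ≤ 1 + s * L u y + (s * L u y) ^ 2 := by linarith
      refine (mul_le_mul_of_nonneg_left h3 (hJ u y)).trans (le_of_eq (by ring))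
    have h4 := Finset.sum_le_sum fun u (_ : u ∈ Finset.univ) =>
      Finset.sum_le_sum fun y (_ : y ∈ Finset.univ) => hpt u y
    refine h4.trans ?_
    simp only [Finset.sum_add_distrib, ← Finset.mul_sum]
    simp only [hW1, mul_one, hPU1]
    have h5 := Real.add_one_le_exp (s * I + s ^ 2 * C)
    have h6 : ∑ u, ∑ y, PU u * W u y * L u y = I := rfl
    have h7 : ∑ u, ∑ y, PU u * W u y * L u y ^ 2 = C := rfl
    rw [h6, h7]
    linarith
  refine ⟨s * δ / 2, by positivity, fun n => ?_⟩
  have hpt : ∀ (yn : Fin n → Y) (un : Fin n → U), (∏ t, PU (un t)) *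
        (if ∏ t, W (un t) (yn t) >
            Real.exp (n * (I + δ)) * ∏ t, ∑ u, PU u * W u (yn t)
          then ∏ t, W (un t) (yn t) else 0)
      ≤ Real.exp (-(s * (n * (I + δ)))) *
        ∏ t, (PU (un t) * W (un t) (yn t) * Real.exp (s * L (un t) (yn t))) := by
    intro yn un
    have hnn : 0 ≤ Real.exp (-(s * (n * (I + δ)))) *
        ∏ t, (PU (un t) * W (un t) (yn t) * Real.exp (s * L (un t) (yn t))) :=
      mul_nonneg (Real.exp_nonneg _)
        (Finset.prod_nonneg fun t _ => mul_nonneg (hJ _ _) (Real.exp_nonneg _))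
    split_ifs with hc
    · by_cases hz : ∃ t, PU (un t) * W (un t) (yn t) = 0
      · obtain ⟨t, ht⟩ := hz
        rw [← Finset.prod_mul_distrib, Finset.prod_eq_zero (Finset.mem_univ t) ht]
        exact hnn
      · push Not at hz
        have hp := fun t => pos_of_prod hPU0 hW0 (hz t)
        have hY := fun t => PY_pos hPU0 hW0 (mul_pos (hp t).1 (hp t).2)
        rw [Finset.prod_mul_distrib, ← Finset.prod_mul_distrib, ← Real.exp_sum,
          mul_left_comm, ← Real.exp_add]
        refine le_mul_of_one_le_right (Finset.prod_nonneg fun t _ => hJ _ _) (Real.one_le_exp ?_)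
        rw [← Finset.mul_sum]
        have hlog := Real.log_lt_log (mul_pos (Real.exp_pos _)
          (Finset.prod_pos fun t _ => hY t)) hc
        rw [Real.log_mul (Real.exp_pos _).ne' (Finset.prod_pos fun t _ => hY t).ne',
          Real.log_exp, Real.log_prod (fun t _ => (hY t).ne'),
          Real.log_prod (fun t _ => (hp t).2.ne')] at hlog
        have hsum : ∑ t, L (un t) (yn t) = ∑ t, Real.log (W (un t) (yn t))
            - ∑ t, Real.log (∑ u, PU u * W u (yn t)) := by
          rw [← Finset.sum_sub_distrib]
          exact Finset.sum_congr rfl fun t _ => Real.log_div (hp t).2.ne' (hY t).ne'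
        nlinarith
    · rw [mul_zero]; exact hnn
  refine (Finset.sum_le_sum fun yn _ => Finset.sum_le_sum fun un _ => hpt yn un).trans ?_
  simp only [← Finset.mul_sum]
  have hsum : ∑ yn : Fin n → Y, ∑ un : Fin n → U,
      ∏ t, (PU (un t) * W (un t) (yn t) * Real.exp (s * L (un t) (yn t)))
      = (∑ y, ∑ u, PU u * W u y * Real.exp (s * L u y)) ^ n := by
    have h1 : ∀ yn : Fin n → Y, ∑ un : Fin n → U,
      ∏ t, (PU (un t) * W (un t) (yn t) * Real.exp (s * L (un t) (yn t)))
      = ∏ t, ∑ u, PU u * W u (yn t) * Real.exp (s * L u (yn t)) := fun yn =>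
        sum_pi (fun (t : Fin n) u => PU u * W u (yn t) * Real.exp (s * L u (yn t)))
    simp only [h1]
    rw [sum_pi (fun (_ : Fin n) y => ∑ u, PU u * W u y * Real.exp (s * L u y))]
    simp
  rw [hsum]
  have hΦ0 : 0 ≤ ∑ y, ∑ u, PU u * W u y * Real.exp (s * L u y) :=
    Finset.sum_nonneg fun y _ => Finset.sum_nonneg fun u _ =>
      mul_nonneg (hJ u y) (Real.exp_nonneg _)
  refine (mul_le_mul_of_nonneg_left (pow_le_pow_left₀ hΦ0 hΦ n) (Real.exp_nonneg _)).trans ?_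
  rw [← Real.exp_nat_mul, ← Real.exp_add]
  refine Real.exp_le_exp.2 ?_
  have h8 : s ^ 2 * C ≤ s * (δ / 2) := by
    rw [sq, mul_assoc]; exact mul_le_mul_of_nonneg_left hsC hs0.le
  have h9 : (n:ℝ) * (s ^ 2 * C) ≤ n * (s * (δ / 2)) := mul_le_mul_of_nonneg_left h8 (by positivity)
  nlinarith

end Info

lemma ev_exp {a ε : ℝ} (ha : 0 < a) (hε : 0 < ε) : ∀ᶠ n : ℕ in atTop, Real.exp (-(a * n)) ≤ ε := by
  have h : Tendsto (fun n : ℕ => Real.exp (-(a * n))) atTop (nhds 0) :=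
    Real.tendsto_exp_neg_atTop_nhds_zero.comp
      (tendsto_natCast_atTop_atTop.const_mul_atTop ha)
  exact h.eventually (eventually_le_nhds hε)

lemma tendsto_bound (R γ : ℝ) (hγ : 0 < γ) :
    Tendsto (fun n : ℕ => ((⌈(2 : ℝ) ^ ((n : ℝ) * R)⌉₊ : ℕ) : ℝ) *
      Real.exp (-Real.exp (γ * (n : ℝ)))) atTop (nhds 0) := by
  have hub : Tendsto (fun n : ℕ => 2 * Real.exp (-((n:ℝ)))) atTop (nhds 0) := by
    have := (Real.tendsto_exp_neg_atTop_nhds_zero.comp tendsto_natCast_atTop_atTop).const_mul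
      (2:ℝ) (α := ℕ)
    simpa using this
  refine tendsto_of_tendsto_of_tendsto_of_le_of_le' tendsto_const_nhds hub
    (Eventually.of_forall fun n => by positivity) ?_
  filter_upwards [eventually_ge_atTop ⌈2 * (|R| + 1) / γ ^ 2⌉₊] with n hn
  have hn' : 2 * (|R| + 1) / γ ^ 2 ≤ n := (Nat.le_ceil _).trans (by exact_mod_cast hn)
  rw [div_le_iff₀ (by positivity)] at hn'
  have hn0 : (0:ℝ) ≤ n := Nat.cast_nonneg n
  have h1 : (n:ℝ) * (|R| + 1) ≤ Real.exp (γ * n) := by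
    have := Real.quadratic_le_exp_of_nonneg (mul_nonneg hγ.le hn0)
    have h2 := mul_le_mul_of_nonneg_left hn' hn0
    nlinarith [mul_nonneg hγ.le hn0]
  have h2 : (2:ℝ) ^ ((n:ℝ) * R) ≤ Real.exp (n * |R|) := by
    rw [Real.rpow_def_of_pos (by norm_num)]
    refine Real.exp_le_exp.2 ?_
    have hl : Real.log 2 ≤ 1 := by linarith [Real.log_two_lt_d9]
    have hl0 : 0 ≤ Real.log 2 := Real.log_nonneg (by norm_num)
    have h3 : (n:ℝ) * R ≤ n * |R| := mul_le_mul_of_nonneg_left (le_abs_self R) hn0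
    have h4 : 0 ≤ (n:ℝ) * |R| := by positivity
    nlinarith
  have h3 : ((⌈(2 : ℝ) ^ ((n : ℝ) * R)⌉₊ : ℕ) : ℝ) ≤ 2 * Real.exp (n * |R|) := by
    have := (Nat.ceil_lt_add_one (show (0:ℝ) ≤ (2 : ℝ) ^ ((n : ℝ) * R) by positivity)).le
    have h4 : 1 ≤ Real.exp (n * |R|) := Real.one_le_exp (by positivity)
    linarith
  calc _ ≤ 2 * Real.exp (n * |R|) * Real.exp (-Real.exp (γ * (n : ℝ))) :=
        mul_le_mul_of_nonneg_right h3 (Real.exp_nonneg _)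
    _ = 2 * Real.exp (n * |R| + -Real.exp (γ * (n : ℝ))) := by rw [Real.exp_add]; ring
    _ ≤ _ := by gcongr; linarith

end SoftCov

/-- **Uniform-over-messages soft covering via union bound** (semantic secrecy step of the
achievability proof).  Draw a codebook `{Uⁿ(m,ℓ)}` with `m ∈ [1:⌈2^{nR}⌉]`,
`ℓ ∈ [1:⌈2^{nR'}⌉]`, i.i.d. from `P_U^{⊗n}`, and for each `m` let `Q̂ᵐ_{Yⁿ}` be the
output pmf induced by the sub-codebook of message `m`.  If `R' > I(U;Y)`, then there
exist `γ₁, γ₂ > 0` such that for all sufficiently large `n`,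
`P(maxₘ V(Q̂ᵐ_{Yⁿ}, P_Y^{⊗n}) > (1/√2) e^{−γ₁ n}) ≤ ⌈2^{nR}⌉ e^{−e^{γ₂ n}}`;
in particular this probability tends to `0` as `n → ∞`. -/
theorem uniform_soft_covering_union_bound
    {U Y : Type*} [Fintype U] [Fintype Y]
    (PU : U → ℝ) (W : U → Y → ℝ)
    (hPU0 : ∀ u, 0 ≤ PU u) (hPU1 : ∑ u, PU u = 1)
    (hW0 : ∀ u y, 0 ≤ W u y) (hW1 : ∀ u, ∑ y, W u y = 1)
    (R R' : ℝ)
    (hR' : R' > mi (fun z : U × Y => PU z.1 * W z.1 z.2) Prod.fst Prod.snd) :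
    ∃ γ₁ > (0 : ℝ), ∃ γ₂ > (0 : ℝ),
      let prob : ℕ → ℝ := fun n =>
        ∑ c : Fin (⌈(2 : ℝ) ^ ((n : ℝ) * R)⌉₊) × Fin (⌈(2 : ℝ) ^ ((n : ℝ) * R')⌉₊) →
            Fin n → U,
          if ∃ m : Fin (⌈(2 : ℝ) ^ ((n : ℝ) * R)⌉₊),
              TV (fun yn : Fin n → Y =>
                    (1 / ((⌈(2 : ℝ) ^ ((n : ℝ) * R')⌉₊ : ℕ) : ℝ)) *
                      ∑ l, ∏ t, W (c (m, l) t) (yn t))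
                  (fun yn : Fin n → Y => ∏ t, ∑ u, PU u * W u (yn t))
                > (1 / Real.sqrt 2) * Real.exp (-γ₁ * (n : ℝ))
          then ∏ ml, ∏ t, PU (c ml t) else 0
      (∀ᶠ n : ℕ in atTop,
        prob n ≤ ((⌈(2 : ℝ) ^ ((n : ℝ) * R)⌉₊ : ℕ) : ℝ) * Real.exp (-Real.exp (γ₂ * (n : ℝ)))) ∧
      Tendsto prob atTop (nhds 0) := by
  have hl2 : 0 < Real.log 2 := Real.log_pos (by norm_num)
  rw [SoftCov.mi_eq hPU0 hW0 hW1, gt_iff_lt, div_lt_iff₀ hl2] at hR'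
  have hI0 := SoftCov.inat_nonneg hPU0 hPU1 hW0 hW1
  set I := SoftCov.inat PU W with hI
  set ρ := R' * Real.log 2 with hρ
  set δ := (ρ - I) / 2 with hδ
  have hδ0 : 0 < δ := by rw [hδ]; linarith
  have hρ0 : 0 < ρ := by linarith
  obtain ⟨β, hβ, hch⟩ := SoftCov.chern hPU0 hPU1 hW0 hW1 δ hδ0
  set κ := min (δ / 2) β with hκ
  have hκ0 : 0 < κ := lt_min (by linarith) hβ
  set γ := min (κ / 2) (ρ / 4) with hγ
  have hγ0 : 0 < γ := lt_min (by linarith) (by linarith)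
  have hγκ : γ ≤ κ / 2 := min_le_left _ _
  have hγρ : γ ≤ ρ / 4 := min_le_right _ _
  refine ⟨γ, hγ0, ρ / 4, by linarith, ?_⟩
  intro prob
  have hmain : ∀ᶠ n : ℕ in atTop,
      prob n ≤ ((⌈(2 : ℝ) ^ ((n : ℝ) * R)⌉₊ : ℕ) : ℝ) *
        Real.exp (-Real.exp (ρ / 4 * (n : ℝ))) := by
    filter_upwards [SoftCov.ev_exp (show 0 < κ / 2 by linarith) (show (0:ℝ) < 1 / 8 by norm_num),
      SoftCov.ev_exp (show 0 < ρ / 4 by linarith) (show (0:ℝ) < 1 / 64 by norm_num)] with n hn1 hn2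
    have hn0 : (0:ℝ) ≤ n := Nat.cast_nonneg n
    set M := ⌈(2 : ℝ) ^ ((n : ℝ) * R')⌉₊ with hM
    set K := ⌈(2 : ℝ) ^ ((n : ℝ) * R)⌉₊ with hK
    have hMge : Real.exp (n * ρ) ≤ M := by
      refine le_trans (le_of_eq ?_) (Nat.le_ceil _)
      rw [Real.rpow_def_of_pos (by norm_num), hρ]; congr 1; ring
    have hM0' : (0:ℝ) < M := (Real.exp_pos _).trans_le hMge
    have hM0 : 0 < M := by exact_mod_cast hM0'
    set p : (Fin n → U) → ℝ := fun un => ∏ t, PU (un t) with hp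
    set V : (Fin n → U) → (Fin n → Y) → ℝ := fun un yn => ∏ t, W (un t) (yn t) with hV
    have hp0 : ∀ a, 0 ≤ p a := fun a => Finset.prod_nonneg fun t _ => hPU0 _
    have hp1 : ∑ a, p a = 1 := SoftCov.sum_prod_one PU hPU1
    have hV0 : ∀ a b, 0 ≤ V a b := fun a b => Finset.prod_nonneg fun t _ => hW0 _ _
    have hV1 : ∀ a, ∑ b, V a b = 1 := by
      intro a
      rw [hV, SoftCov.sum_pi (fun (t : Fin n) y => W (a t) y)]
      simp [hW1]
    have hPY : (fun yn : Fin n → Y => ∏ t, ∑ u, PU u * W u (yn t))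
        = fun yn => ∑ a, p a * V a yn := by
      funext yn
      rw [← SoftCov.sum_pi (fun (t : Fin n) u => PU u * W u (yn t))]
      simp only [hp, hV, Finset.prod_mul_distrib]
    set x : ℝ := (1 / Real.sqrt 2) * Real.exp (-γ * (n : ℝ)) with hx
    set f : (Fin M → Fin n → U) → ℝ := fun d =>
      TV (fun b => (1 / (M : ℝ)) * ∑ l, V (d l) b) (fun b => ∑ a, p a * V a b) with hf
    set T := Real.exp (n * (I + δ)) with hT
    have hmean : ∑ d, (∏ i, p (d i)) * f d ≤ 2 * Real.exp (-(κ * n)) := by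
      refine (SoftCov.mean_bound p hp0 hp1 V hV0 hV1 M hM0 T (Real.exp_nonneg _)).trans ?_
      have h1 : Real.sqrt (T / M) ≤ Real.exp (-(κ * n)) := by
        refine Real.sqrt_le_iff.2 ⟨Real.exp_nonneg _, ?_⟩
        rw [div_le_iff₀ hM0', ← Real.exp_nat_mul]
        refine le_trans ?_ (mul_le_mul_of_nonneg_left hMge (Real.exp_nonneg _))
        rw [← Real.exp_add, hT]
        refine Real.exp_le_exp.2 ?_
        have : κ ≤ δ / 2 := min_le_left _ _
        have := mul_le_mul_of_nonneg_right this hn0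
        have e : ρ = I + 2 * δ := by rw [hδ]; ring
        rw [e]; push_cast; nlinarith
      have h2 : ∑ b, ∑ a, p a * (if V a b > T * ∑ a', p a' * V a' b then V a b else 0)
          ≤ Real.exp (-(κ * n)) := by
        have h3 := hch n
        have h4 : ∀ yn : Fin n → Y, ∏ t, ∑ u, PU u * W u (yn t) = ∑ a, p a * V a yn :=
          fun yn => congrFun hPY yn
        simp only [h4] at h3
        refine h3.trans (Real.exp_le_exp.2 ?_)
        have : κ ≤ β := min_le_right _ _
        nlinarith [mul_le_mul_of_nonneg_right this hn0]
      linarith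
    set t : ℝ := Real.exp (-(γ * n)) / 4 with ht
    have hexp1 : Real.exp (-(γ * n)) ≤ 1 := Real.exp_le_one_iff.2 (by
      have := mul_nonneg hγ0.le hn0; linarith)
    have hmt : (∑ d, (∏ i, p (d i)) * f d) + t ≤ x := by
      have h1 : Real.exp (-(κ * n)) ≤ Real.exp (-(γ * n)) * (1 / 8) := by
        refine le_trans ?_ (mul_le_mul_of_nonneg_left hn1 (Real.exp_nonneg _))
        rw [← Real.exp_add]
        refine Real.exp_le_exp.2 ?_
        nlinarith [mul_le_mul_of_nonneg_right hγκ hn0]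
      have h2 : (1:ℝ) / 2 ≤ 1 / Real.sqrt 2 := by
        refine one_div_le_one_div_of_le (by positivity) ?_
        rw [Real.sqrt_le_iff]; norm_num
      have h3 : 1 / 2 * Real.exp (-(γ * n)) ≤ x := by
        rw [hx, neg_mul]; exact mul_le_mul_of_nonneg_right h2 (Real.exp_nonneg _)
      rw [ht]; linarith
    have htail := SoftCov.tail_bound p hp0 hp1 M hM0 f
      (fun d i a => SoftCov.tv_diff V hV0 hV1 _ M d i a) t x
      (by positivity) (by rw [ht]; linarith) hmt
    have hfin : Real.exp (-(M * t ^ 2 / 4)) ≤ Real.exp (-Real.exp (ρ / 4 * n)) := by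
      refine Real.exp_le_exp.2 (neg_le_neg ?_)
      have h1 : t ^ 2 = Real.exp (-(2 * γ * n)) / 16 := by
        rw [ht, div_pow, ← Real.exp_nat_mul]; congr 1
        · congr 1; push_cast; ring
        · norm_num
      have h2 : Real.exp (n * ρ) * Real.exp (-(2 * γ * n)) ≤ M * Real.exp (-(2 * γ * n)) :=
        mul_le_mul_of_nonneg_right hMge (Real.exp_nonneg _)
      have h3 : Real.exp (ρ / 4 * n) ≤ Real.exp (n * ρ) * Real.exp (-(2 * γ * n)) * (1 / 64) := by
        refine le_trans ?_ (mul_le_mul_of_nonneg_left hn2 (by positivity))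
        rw [← Real.exp_add, ← Real.exp_add]
        refine Real.exp_le_exp.2 ?_
        nlinarith [mul_le_mul_of_nonneg_right hγρ hn0]
      rw [h1]; linarith
    have hu := SoftCov.union_bound p hp0 hp1 K M (fun d => f d > x) _ (htail.trans hfin)
    refine le_trans (le_of_eq ?_) hu
    simp only [prob]
    rw [hPY]
  refine ⟨hmain, ?_⟩
  refine tendsto_of_tendsto_of_tendsto_of_le_of_le' tendsto_const_nhds
    (SoftCov.tendsto_bound R (ρ / 4) (by linarith)) (Eventually.of_forall fun n => ?_) hmain
  refine Finset.sum_nonneg fun c _ => ?_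
  split_ifs
  · exact Finset.prod_nonneg fun ml _ => Finset.prod_nonneg fun t _ => hPU0 _
  · exact le_rfl
end
end

section
/- Key-rate chain inequality (key converse step). Let M, K, S, X be finitely-valued random variables on a common probability space such that K is independent of the pair (M, S). Then H(K) ≥ I(M, K ; X | S) − I(M ; (X, S)). In particular, if K is uniform on a finite set 𝒦, then log₂ |𝒦| ≥ I(M, K ; X | S) − I(M ; (X, S)). -/
open Finset Filter Real

noncomputable section

open scoped Classical

lemma sum_pushf {α β : Type*} [Fintype α] [Fintype β] (p : α → ℝ) (f : α → β) (F : β → ℝ) :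
    ∑ b, pushf p f b * F b = ∑ a, p a * F (f a) := by
  unfold pushf
  simp only [Finset.sum_mul]
  rw [Finset.sum_comm]
  refine Finset.sum_congr rfl fun a _ => ?_
  simp [ite_mul]

lemma entRV_eq {α β : Type*} [Fintype α] [Fintype β] (p : α → ℝ) (f : α → β) :
    entRV p f = -∑ a, p a * Real.logb 2 (pushf p f (f a)) := by
  unfold entRV ent
  rw [sum_pushf p f (fun b => Real.logb 2 (pushf p f b))]

lemma pushf_nonneg {α β : Type*} [Fintype α] (p : α → ℝ) (hp : ∀ a, 0 ≤ p a)
    (f : α → β) (b : β) : 0 ≤ pushf p f b := by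
  unfold pushf
  refine Finset.sum_nonneg fun a _ => ?_
  split_ifs
  · exact hp a
  · exact le_rfl

lemma le_pushf {α β : Type*} [Fintype α] (p : α → ℝ) (hp : ∀ a, 0 ≤ p a)
    (f : α → β) (a : α) : p a ≤ pushf p f (f a) := by
  unfold pushf
  have h := Finset.single_le_sum (f := fun x => if f x = f a then p x else 0)
    (fun x _ => by
      show 0 ≤ if f x = f a then p x else 0
      split_ifs
      · exact hp x
      · exact le_rfl) (Finset.mem_univ a)
  simpa using h

lemma sum_pushf_one {α β : Type*} [Fintype α] [Fintype β] (p : α → ℝ) (f : α → β) :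
    ∑ b, pushf p f b = ∑ a, p a := by
  simpa using sum_pushf p f (fun _ => 1)

/-- Entropy does not increase under a map. -/
lemma entRV_mono {α β γ : Type*} [Fintype α] [Fintype β] [Fintype γ] (p : α → ℝ)
    (hp : ∀ a, 0 ≤ p a) (f : α → β) (g : α → γ) (h : ∀ a b, f a = f b → g a = g b) :
    entRV p g ≤ entRV p f := by
  rw [entRV_eq, entRV_eq]
  refine neg_le_neg (Finset.sum_le_sum fun a _ => ?_)
  rcases (hp a).eq_or_lt with h0 | h0
  · simp [← h0]
  · refine mul_le_mul_of_nonneg_left ?_ (hp a)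
    refine Real.logb_le_logb_of_le (by norm_num) (h0.trans_le (le_pushf p hp f a)) ?_
    unfold pushf
    refine Finset.sum_le_sum fun x _ => ?_
    by_cases hx : f x = f a
    · simp [hx, h x a hx]
    · simp only [hx, if_false]
      split_ifs
      · exact hp x
      · exact le_rfl

/-- Subadditivity of entropy. -/
lemma entRV_subadd {α β γ : Type*} [Fintype α] [Fintype β] [Fintype γ] (p : α → ℝ)
    (hp : ∀ a, 0 ≤ p a) (hp1 : ∑ a, p a = 1) (f : α → β) (g : α → γ) :
    entRV p (fun a => (f a, g a)) ≤ entRV p f + entRV p g := by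
  rw [entRV_eq, entRV_eq, entRV_eq]
  set q := pushf p (fun a => (f a, g a)) with hq
  have hl : 0 < Real.log 2 := Real.log_pos (by norm_num)
  have key : ∀ a, p a * Real.logb 2 (pushf p f (f a)) + p a * Real.logb 2 (pushf p g (g a))
      - p a * Real.logb 2 (q (f a, g a)) ≤
      (p a * (pushf p f (f a) * pushf p g (g a) / q (f a, g a)) - p a) / Real.log 2 := by
    intro a
    rcases (hp a).eq_or_lt with h0 | h0
    · simp [← h0]
    have h1 := h0.trans_le (le_pushf p hp f a)
    have h2 := h0.trans_le (le_pushf p hp g a)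
    have h3 : 0 < q (f a, g a) := h0.trans_le (le_pushf p hp (fun a => (f a, g a)) a)
    have h4 := Real.log_le_sub_one_of_pos (div_pos (mul_pos h1 h2) h3)
    rw [Real.log_div (mul_pos h1 h2).ne' h3.ne', Real.log_mul h1.ne' h2.ne'] at h4
    have h5 := mul_le_mul_of_nonneg_left h4 (hp a)
    rw [le_div_iff₀ hl]
    unfold Real.logb
    field_simp
    field_simp at h5
    linarith
  have hs := Finset.sum_le_sum (s := Finset.univ) (fun a _ => key a)
  rw [← Finset.sum_div, Finset.sum_sub_distrib, Finset.sum_sub_distrib,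
    Finset.sum_add_distrib, hp1] at hs
  have e := sum_pushf p (fun a => (f a, g a))
    (fun b => pushf p f b.1 * pushf p g b.2 / q b)
  have hle : ∑ a, p a * (pushf p f (f a) * pushf p g (g a) / q (f a, g a)) ≤ 1 := by
    rw [← e]
    calc _ ≤ ∑ b : β × γ, pushf p f b.1 * pushf p g b.2 := by
          refine Finset.sum_le_sum fun b _ => ?_
          rw [← hq]
          by_cases hb : q b = 0
          · rw [hb, zero_mul]
            exact mul_nonneg (pushf_nonneg p hp _ _) (pushf_nonneg p hp _ _)
          · rw [mul_div_cancel₀ _ hb]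
      _ = 1 := by
          rw [Fintype.sum_prod_type]
          simp only [← Finset.mul_sum]
          rw [sum_pushf_one, hp1]
          simp only [mul_one]
          rw [sum_pushf_one, hp1]
  have h0 : (∑ a, p a * (pushf p f (f a) * pushf p g (g a) / q (f a, g a)) - 1)
      / Real.log 2 ≤ 0 := div_nonpos_of_nonpos_of_nonneg (by linarith) hl.le
  linarith

/-- **Key-rate chain inequality (key converse step).**  Let `M, K, S, X` be
finitely-valued random variables on a common (finite) probability space such that `K`
is independent of the pair `(M, S)`.  Then `H(K) ≥ I(M,K;X|S) − I(M;(X,S))`.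
In particular, if `K` is uniform on a finite set `𝒦`, then
`log₂ |𝒦| ≥ I(M,K;X|S) − I(M;(X,S))`. -/
theorem key_rate_chain
    {Ω MT KT ST XT : Type*} [Fintype Ω] [Fintype MT] [Fintype KT] [Fintype ST] [Fintype XT]
    (p : Ω → ℝ) (hp0 : ∀ ω, 0 ≤ p ω) (hp1 : ∑ ω, p ω = 1)
    (fM : Ω → MT) (fK : Ω → KT) (fS : Ω → ST) (fX : Ω → XT)
    -- K is independent of (M, S)
    (hind : ∀ (k : KT) (ms : MT × ST),
      pushf p (fun ω => (fK ω, fM ω, fS ω)) (k, ms)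
        = pushf p fK k * pushf p (fun ω => (fM ω, fS ω)) ms) :
    entRV p fK ≥
      cmi p (fun ω => (fM ω, fK ω)) fX fS - mi p fM (fun ω => (fX ω, fS ω)) ∧
    ((∀ k : KT, pushf p fK k = 1 / (Fintype.card KT : ℝ)) →
      Real.logb 2 (Fintype.card KT : ℝ) ≥
        cmi p (fun ω => (fM ω, fK ω)) fX fS - mi p fM (fun ω => (fX ω, fS ω))) := by
  have main : entRV p fK ≥
      cmi p (fun ω => (fM ω, fK ω)) fX fS - mi p fM (fun ω => (fX ω, fS ω)) := by
    unfold cmi mi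
    have h1 := entRV_subadd p hp0 hp1 fK (fun ω => (fM ω, fS ω))
    have h2 := entRV_subadd p hp0 hp1 fM fS
    have h3 := entRV_mono p hp0 (fun ω => (fK ω, fM ω, fS ω)) (fun ω => ((fM ω, fK ω), fS ω))
      (by intro a b h; simp only [Prod.mk.injEq] at h ⊢; tauto)
    have h4 := entRV_mono p hp0 (fun ω => ((fM ω, fK ω), fX ω, fS ω))
      (fun ω => (fM ω, fX ω, fS ω))
      (by intro a b h; simp only [Prod.mk.injEq] at h ⊢; tauto)
    linarith
  refine ⟨main, fun hu => ?_⟩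
  have he : entRV p fK = Real.logb 2 (Fintype.card KT : ℝ) := by
    rw [entRV_eq]
    simp only [hu]
    rw [← Finset.sum_mul, hp1, one_div, Real.logb_inv]
    ring
  rw [← he]
  exact main
end
end

section
/- Covertness implies near-independence of the message (secrecy step of the converse). Let M be uniformly distributed on a finite set ℳ and let Y be a finitely-valued random variable on a finite set 𝒴 with |𝒴| ≥ 2. Suppose there is a pmf Q on 𝒴 and σ ∈ [0, 1/4] such that for every m ∈ ℳ the conditional pmf of Y given M = m satisfies V(P_{Y|M=m}, Q) ≤ σ. Then I(M ; Y) ≤ 2σ log₂ |𝒴| + h₂(2σ). In particular, if σ = σ_n → 0 and Y = (X^n, S^n) with |𝒴| growing at most exponentially in n, then I(M ; Y) = o(n). -/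
open Finset Filter Real

noncomputable section

open scoped Classical

lemma nml_subadd {a b : ℝ} (ha : 0 ≤ a) (hb : 0 ≤ b) :
    negMulLog (a + b) ≤ negMulLog a + negMulLog b := by
  rcases ha.eq_or_lt with rfl | ha
  · simp
  rcases hb.eq_or_lt with rfl | hb
  · simp
  have h1 : Real.log a ≤ Real.log (a + b) := Real.log_le_log ha (by linarith)
  have h2 : Real.log b ≤ Real.log (a + b) := Real.log_le_log hb (by linarith)
  simp only [negMulLog]
  nlinarith

lemma nml_lower {c q t : ℝ} (hc : 0 ≤ c) (hq : 0 ≤ q) (hqt : q ≤ t) (ht : t < 1) :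
    negMulLog c + c * Real.log (1 - t) ≤ negMulLog (c + q) := by
  have ht0 : 0 ≤ t := hq.trans hqt
  rcases ht0.eq_or_lt with h0 | h0
  · have : q = 0 := by linarith
    subst this; subst h0; simp
  have h1t : 0 < 1 - t := by linarith
  have hj := concaveOn_negMulLog.2 (x := c / (1 - t)) (y := q / t)
    (by simp only [Set.mem_Ici]; positivity) (by simp only [Set.mem_Ici]; positivity)
    h1t.le h0.le (by ring)
  simp only [smul_eq_mul] at hj
  have e1 : (1 - t) * (c / (1 - t)) = c := by field_simp
  have e2 : t * (q / t) = q := by field_simp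
  rw [e1, e2] at hj
  have hn : 0 ≤ negMulLog (q / t) :=
    negMulLog_nonneg (by positivity) ((div_le_one h0).2 hqt)
  have e3 : (1 - t) * negMulLog (c / (1 - t)) = negMulLog c + c * Real.log (1 - t) := by
    rcases hc.eq_or_lt with rfl | hc
    · simp
    simp only [negMulLog]
    rw [Real.log_div hc.ne' h1t.ne']
    field_simp
    ring
  have := mul_nonneg h0.le hn
  linarith

lemma nml_jensen {Y : Type*} [Fintype Y] [Nonempty Y] (r : Y → ℝ) (hr : ∀ y, 0 ≤ r y) :
    ∑ y, negMulLog (r y) ≤ (∑ y, r y) * Real.log (Fintype.card Y) + negMulLog (∑ y, r y) := by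
  have hN : (0:ℝ) < Fintype.card Y := by exact_mod_cast Fintype.card_pos
  have hj := concaveOn_negMulLog.le_map_sum (t := Finset.univ)
    (w := fun _ : Y => ((Fintype.card Y : ℝ))⁻¹) (p := r) (fun _ _ => by positivity)
    (by simp [hN.ne']) (fun y _ => hr y)
  simp only [smul_eq_mul, ← Finset.mul_sum] at hj
  rw [negMulLog_mul] at hj
  have e : negMulLog ((Fintype.card Y : ℝ))⁻¹
      = (Fintype.card Y : ℝ)⁻¹ * Real.log (Fintype.card Y) := by
    simp [negMulLog, Real.log_inv]
  rw [e] at hj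
  have := mul_le_mul_of_nonneg_left hj hN.le
  calc _ = (Fintype.card Y : ℝ) * ((Fintype.card Y : ℝ)⁻¹ * ∑ y, negMulLog (r y)) := by
        field_simp
    _ ≤ _ := this
    _ = _ := by field_simp

lemma fannes {Y : Type*} [Fintype Y] [Nonempty Y] (P R : Y → ℝ)
    (hP : ∀ y, 0 ≤ P y) (hR : ∀ y, 0 ≤ R y) (hP1 : ∑ y, P y = 1) (hR1 : ∑ y, R y = 1)
    (ht : TV P R < 1) :
    ∑ y, negMulLog (R y) - ∑ y, negMulLog (P y)
      ≤ TV P R * Real.log (Fintype.card Y) + binEntropy (TV P R) := by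
  set t := TV P R with htdef
  let c : Y → ℝ := fun y => min (P y) (R y)
  have hc : ∀ y, 0 ≤ c y := fun y => le_min (hP y) (hR y)
  have hr : ∀ y, 0 ≤ R y - c y := fun y => sub_nonneg.2 (min_le_right _ _)
  have hq : ∀ y, 0 ≤ P y - c y := fun y => sub_nonneg.2 (min_le_left _ _)
  have hcs : ∑ y, c y = 1 - t := by
    have : ∀ y, c y = (P y + R y - |P y - R y|) / 2 := fun y => by
      simp only [c]
      rcases le_total (P y) (R y) with h | h
      · rw [min_eq_left h, abs_of_nonpos (by linarith)]; ring
      · rw [min_eq_right h, abs_of_nonneg (by linarith)]; ring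
    simp only [this]
    rw [← Finset.sum_div, Finset.sum_sub_distrib, Finset.sum_add_distrib, hP1, hR1, htdef, TV]
    ring
  have hrs : ∑ y, (R y - c y) = t := by rw [Finset.sum_sub_distrib, hcs, hR1]; ring
  have hqs : ∑ y, (P y - c y) = t := by rw [Finset.sum_sub_distrib, hcs, hP1]; ring
  have hqt : ∀ y, P y - c y ≤ t := fun y => by
    rw [← hqs]
    exact Finset.single_le_sum (f := fun y => P y - c y) (fun i _ => hq i) (Finset.mem_univ y)
  have h1 : ∑ y, negMulLog (R y) ≤ ∑ y, (negMulLog (c y) + negMulLog (R y - c y)) :=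
    Finset.sum_le_sum fun y _ => by
      have := nml_subadd (hc y) (hr y)
      rwa [add_sub_cancel] at this
  have h2 : ∑ y, (negMulLog (c y) + c y * Real.log (1 - t)) ≤ ∑ y, negMulLog (P y) :=
    Finset.sum_le_sum fun y _ => by
      have := nml_lower (hc y) (hq y) (hqt y) ht
      rwa [add_sub_cancel] at this
  have h3 := nml_jensen (fun y => R y - c y) hr
  rw [hrs] at h3
  rw [Finset.sum_add_distrib] at h1 h2
  rw [← Finset.sum_mul, hcs] at h2
  rw [binEntropy_eq_negMulLog_add_negMulLog_one_sub]
  have : negMulLog (1 - t) = -((1 - t) * Real.log (1 - t)) := by simp only [negMulLog]; ring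
  linarith

lemma ent_eq {α : Type*} [Fintype α] (p : α → ℝ) :
    ent p = (∑ a, negMulLog (p a)) / Real.log 2 := by
  rw [ent, Finset.sum_div, ← Finset.sum_neg_distrib]
  refine Finset.sum_congr rfl fun a _ => ?_
  simp only [negMulLog, Real.logb]; ring

lemma h2_eq (t : ℝ) : h2 t = binEntropy t / Real.log 2 := by
  rw [h2, binEntropy_eq_negMulLog_add_negMulLog_one_sub]
  simp only [negMulLog, Real.logb]; ring

/-- **Covertness implies near-independence of the message** (secrecy step of the
converse).  Let `M` be uniform on a finite set `ℳ` and `Y` a finitely-valued random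
variable on a finite set `𝒴` with `|𝒴| ≥ 2`, with joint pmf `p` on `ℳ × 𝒴`.  If there
are a pmf `Q` on `𝒴` and `σ ∈ [0, 1/4]` such that `V(P_{Y|M=m}, Q) ≤ σ` for every `m`,
then `I(M;Y) ≤ 2σ log₂ |𝒴| + h₂(2σ)`. -/
theorem covertness_near_independence
    {MT YT : Type*} [Fintype MT] [Fintype YT] [Nonempty MT]
    (hY : 2 ≤ Fintype.card YT)
    (p : MT × YT → ℝ) (hp0 : ∀ z, 0 ≤ p z) (hp1 : ∑ z, p z = 1)
    -- M is uniform on MT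
    (hunif : ∀ m : MT, ∑ y : YT, p (m, y) = 1 / (Fintype.card MT : ℝ))
    (Q : YT → ℝ) (hQ0 : ∀ y, 0 ≤ Q y) (hQ1 : ∑ y, Q y = 1)
    (σ : ℝ) (hσ0 : 0 ≤ σ) (hσ1 : σ ≤ 1 / 4)
    -- the conditional pmf of Y given M = m is σ-close to Q in total variation
    (hTV : ∀ m : MT,
      TV (fun y => (Fintype.card MT : ℝ) * p (m, y)) Q ≤ σ) :
    mi p Prod.fst Prod.snd ≤
      2 * σ * Real.logb 2 (Fintype.card YT : ℝ) + h2 (2 * σ) := by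
  classical
  have hYne : Nonempty YT := Fintype.card_pos_iff.1 (by omega)
  have hK : (0:ℝ) < Fintype.card MT := by exact_mod_cast Fintype.card_pos
  set K : ℝ := (Fintype.card MT : ℝ) with hKdef
  set N : ℝ := (Fintype.card YT : ℝ) with hNdef
  have hN1 : 0 ≤ Real.log N := Real.log_nonneg (by
    have : (2:ℝ) ≤ N := by rw [hNdef]; exact_mod_cast hY
    linarith)
  have hl2 : 0 < Real.log 2 := Real.log_pos (by norm_num)
  let R : YT → ℝ := fun y => ∑ m, p (m, y)
  let P : MT → YT → ℝ := fun m y => K * p (m, y)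
  have f1 : pushf p Prod.fst = fun _ => 1 / K := by
    funext m
    rw [← hunif m, pushf, Fintype.sum_prod_type, Finset.sum_eq_single m]
    · simp
    · intro b _ hb; simp [hb]
    · simp
  have f2 : pushf p Prod.snd = R := by
    funext y
    simp [pushf, Fintype.sum_prod_type, R]
  have f3 : pushf p (fun a => (a.1, a.2)) = p := by
    funext z
    simp [pushf]
  have hP0 : ∀ m y, 0 ≤ P m y := fun m y => mul_nonneg hK.le (hp0 _)
  have hP1 : ∀ m, ∑ y, P m y = 1 := fun m => by
    simp only [P]; rw [← Finset.mul_sum, hunif]; field_simp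
  have hR0 : ∀ y, 0 ≤ R y := fun y => Finset.sum_nonneg fun m _ => hp0 _
  have hR1 : ∑ y, R y = 1 := by
    rw [← hp1, Fintype.sum_prod_type_right]
  have hRQ : ∑ y, |Q y - R y| ≤ 2 * σ := by
    have hb : ∀ y, |Q y - R y| ≤ ∑ m, |P m y - Q y| / K := fun y => by
      have : Q y - R y = ∑ m, -((P m y - Q y) / K) := by
        have e : ∀ m, -((P m y - Q y) / K) = Q y / K - p (m, y) := fun m => by
          simp only [P]; field_simp; ring
        simp only [e]
        rw [Finset.sum_sub_distrib]
        simp only [Finset.sum_const, Finset.card_univ, nsmul_eq_mul, R, ← hKdef]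
        field_simp
      rw [this]
      refine (Finset.abs_sum_le_sum_abs _ _).trans (le_of_eq ?_)
      refine Finset.sum_congr rfl fun m _ => ?_
      rw [abs_neg, abs_div, abs_of_pos hK]
    calc _ ≤ ∑ y, ∑ m, |P m y - Q y| / K := Finset.sum_le_sum fun y _ => hb y
      _ = ∑ m, ∑ y, |P m y - Q y| / K := Finset.sum_comm
      _ ≤ ∑ m : MT, 2 * σ / K := Finset.sum_le_sum fun m _ => by
          rw [← Finset.sum_div]
          have := hTV m
          rw [TV] at this
          refine div_le_div_of_nonneg_right ?_ hK.le
          simp only [P]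
          linarith
      _ = 2 * σ := by
          simp only [Finset.sum_const, Finset.card_univ, nsmul_eq_mul, ← hKdef]
          field_simp
  have hPR : ∀ m, TV (P m) R ≤ 2 * σ := fun m => by
    have h := hTV m
    rw [TV] at h ⊢
    have : ∑ y, |P m y - R y| ≤ ∑ y, (|P m y - Q y| + |Q y - R y|) :=
      Finset.sum_le_sum fun y _ => abs_sub_le _ _ _
    rw [Finset.sum_add_distrib] at this
    simp only [P] at this ⊢
    linarith
  have hF : ∀ m, ∑ y, negMulLog (R y) - ∑ y, negMulLog (P m y)
      ≤ 2 * σ * Real.log N + binEntropy (2 * σ) := fun m => by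
    have h := fannes (P m) R (hP0 m) hR0 (hP1 m) hR1 (by linarith [hPR m])
    have ht0 : 0 ≤ TV (P m) R := by
      rw [TV]; exact div_nonneg (Finset.sum_nonneg fun _ _ => abs_nonneg _) (by norm_num)
    have hmono : binEntropy (TV (P m) R) ≤ binEntropy (2 * σ) :=
      binEntropy_strictMonoOn.monotoneOn ⟨ht0, by linarith [hPR m]⟩
        ⟨by linarith, by linarith⟩ (hPR m)
    have := mul_le_mul_of_nonneg_right (hPR m) hN1
    linarith
  have hmi : mi p Prod.fst Prod.snd
      = ((∑ m, (∑ y, negMulLog (R y) - ∑ y, negMulLog (P m y))) / K) / Real.log 2 := by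
    rw [mi, entRV, entRV, entRV, f1, f2, f3, ent_eq, ent_eq, ent_eq, ← add_div, ← sub_div]
    congr 1
    rw [Fintype.sum_prod_type]
    have e : ∀ m, ∑ y, negMulLog (p (m, y))
        = negMulLog (1 / K) + (∑ y, negMulLog (P m y)) / K := fun m => by
      have e' : ∀ y, negMulLog (p (m, y))
          = P m y * negMulLog (1 / K) + negMulLog (P m y) / K := fun y => by
        have : p (m, y) = (1 / K) * P m y := by simp only [P]; field_simp
        rw [this, negMulLog_mul]; ring
      simp only [e']
      rw [Finset.sum_add_distrib, ← Finset.sum_mul, hP1, ← Finset.sum_div, one_mul]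
    simp only [e]
    rw [Finset.sum_add_distrib, Finset.sum_sub_distrib, ← Finset.sum_div]
    simp only [Finset.sum_const, Finset.card_univ, nsmul_eq_mul, ← hKdef]
    field_simp
    ring
  rw [hmi, h2_eq, Real.logb, ← mul_div_assoc, ← add_div]
  refine div_le_div_of_nonneg_right ?_ hl2.le
  rw [div_le_iff₀ hK]
  refine (Finset.sum_le_sum fun m _ => hF m).trans (le_of_eq ?_)
  simp only [Finset.sum_const, Finset.card_univ, nsmul_eq_mul, ← hKdef]
  ring
end
end
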